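/- For any sequence (ε_k) of positive reals tending to 0, there exist a sequence (n_k) of positive integers satisfying n_{k+1}/n_k ≥ 1 + ε_k for all k ≥ k₀, a permutation σ of the positive integers, a bounded sequence of reals (b_N), and a Borel probability measure G on ℝ, such that: (i) the random variables N^{-1/2} Σ_{k=1}^N cos(2π n_{σ(k)} x) − b_N, where x is uniformly distributed on (0,1), converge in distribution to G as N → ∞; (ii) G is not a Gaussian distribution; and (iii) the characteristic function of G at t equals exp( ∫_{ℝ\{0}} ( e^{itx} − 1 − itx/(1+x²) ) dL(x) ), where dL is the measure on ℝ\{0} that is absolutely continuous with respect to Lebesgue measure with density F(x)/(πx) for 0 < x ≤ 1, density G₀(−x)/(π(−x)) for −1 ≤ x < 0, and density 0 for |x| > 1, where F(t) = λ{ x > 0 : sin x / x ≥ t } and G₀(t) = λ{ x > 0 : sin x / x ≤ −t } for t > 0, λ being Lebesgue measure. -/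

import Mathlib

/-!
The sequence contains, in round `i`, a multiple of the progression `1, 2, …, i + 1 + 2 ^ i`. The
ratio of consecutive terms of a progression of length `l` is at least `1 + 1 / l`, so such a round
is admissible as soon as `ε_k (i + 1 + 2 ^ i) ≤ 1` there, and between the rounds the sequence grows
fast. The permutation lists alternately the first `i + 1` terms of the rounds (the main blocks) and
their long tails of length `2 ^ i`, while everything else is postponed to the positions `2 ^ m`.
Among `N` terms there are about `N / 2` from main blocks, of lengths `1, …, K` with
`K (K + 1) / 2 ≈ N / 2`, that is `K ≈ √N`. Since the sum over a progression of length `l` has mean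
absolute value `O(l ^ (1/4))`, the few tails, the incomplete block and the postponed terms
contribute `o(√N)`.

The main blocks are asymptotically independent, because the base frequencies grow so fast. Hence the
limiting characteristic function is that of
`∏_{l ≤ K} φ_l (t / √N) ≈ exp ∑_{l ≤ K} (φ_l (t / √N) - 1)`,
where `φ_l` is the characteristic function of `∑_{j ≤ l} cos (2π j θ)`. On the scale
`θ = v / (2π l)` this sum is close to `l sinc v`, so with `l = u K` the exponent is a Riemann sum
for `∫_0^1 (1 / (π u)) ∫_0^∞ (e^{i t u sinc v} - 1 - i t u sinc v) dv du`. The image of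
`du / (π u) ⊗ dv` under `(u, v) ↦ u sinc v` is the measure `L`, and a constant centering replaces
the compensator `itx` by `itx / (1 + x²)`. The law is not Gaussian because the real part of the
exponent is `o(t²)` and does not vanish identically.
-/

open MeasureTheory Filter Real Topology

noncomputable section

/-- `F(t) = λ{x > 0 : sin x / x ≥ t}`. -/
def Ffun (t : ℝ) : ℝ := (volume {x : ℝ | 0 < x ∧ t ≤ Real.sin x / x}).toReal

/-- `G₀(t) = λ{x > 0 : sin x / x ≤ -t}`. -/
def G0fun (t : ℝ) : ℝ := (volume {x : ℝ | 0 < x ∧ Real.sin x / x ≤ -t}).toReal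

/-- The density of the Lévy measure `dL`: `F(x)/(πx)` for `0 < x ≤ 1`,
`G₀(-x)/(π(-x))` for `-1 ≤ x < 0`, and `0` for other `x` (in particular for `|x| > 1`). -/
def levyDensity (x : ℝ) : ℝ :=
  if 0 < x ∧ x ≤ 1 then Ffun x / (π * x)
  else if -1 ≤ x ∧ x < 0 then G0fun (-x) / (π * (-x))
  else 0

/-- The Lévy measure `L`, absolutely continuous with respect to Lebesgue measure with
density `levyDensity`. -/
def levyMeasure : Measure ℝ :=
  volume.withDensity (fun x => ENNReal.ofReal (levyDensity x))

/-! ### Lévy's continuity theorem and Lévy exponents -/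

theorem exists_tendsto_of_tendsto_charFun (μ : ℕ → ProbabilityMeasure ℝ) (f : ℝ → ℂ)
    (hf : ContinuousAt f 0)
    (h : ∀ t, Tendsto (fun n => charFun (μ n : Measure ℝ) t) atTop (𝓝 (f t))) :
    ∃ G : ProbabilityMeasure ℝ, (∀ t, charFun (G : Measure ℝ) t = f t) ∧
      Tendsto μ atTop (𝓝 G) := by
  have htight := isTightMeasureSet_of_tendsto_charFun (μ := fun n => (μ n : Measure ℝ)) hf h
  have hcompact : IsCompact (closure (Set.range μ)) := by
    apply isCompact_closure_of_isTightMeasureSet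
    convert htight using 1
    ext ν
    simp [eq_comm]
  obtain ⟨G, -, φ, hφ, hG⟩ := hcompact.tendsto_subseq fun n => subset_closure ⟨n, rfl⟩
  have hGf (t : ℝ) : charFun (G : Measure ℝ) t = f t :=
    tendsto_nhds_unique ((ProbabilityMeasure.tendsto_iff_tendsto_charFun.1 hG) t)
      ((h t).comp hφ.tendsto_atTop)
  exact ⟨G, hGf, ProbabilityMeasure.tendsto_iff_tendsto_charFun.2 fun t => hGf t ▸ h t⟩

/-- The characteristic exponent `e^{iy} - 1 - iy` of a compensated jump of size `y`. -/
def compensatedExp (y : ℝ) : ℂ := Complex.exp (y * Complex.I) - 1 - y * Complex.I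

@[fun_prop]
lemma continuous_compensatedExp : Continuous compensatedExp := by unfold compensatedExp; fun_prop

lemma norm_compensatedExp_le (y : ℝ) : ‖compensatedExp y‖ ≤ 2 * y ^ 2 := by
  have hnorm : ‖(y : ℂ) * Complex.I‖ = |y| := by simp
  rw [compensatedExp, ← sq_abs]
  rcases le_or_gt |y| 1 with h | h
  · have hquad := Complex.norm_exp_sub_one_sub_id_le (hnorm.trans_le h)
    rw [hnorm] at hquad
    nlinarith
  · have hlin := Real.norm_exp_I_mul_ofReal_sub_one_le (x := y)
    rw [mul_comm, Real.norm_eq_abs] at hlin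
    have htri := norm_sub_le (Complex.exp (y * Complex.I) - 1) (y * Complex.I)
    rw [hnorm] at htri
    nlinarith

lemma norm_compensatedExp_mul_le (t x : ℝ) : ‖compensatedExp (t * x)‖ ≤ 2 * t ^ 2 * x ^ 2 :=
  (norm_compensatedExp_le _).trans_eq (by ring)

lemma norm_one_sub_cos_mul_le (t x : ℝ) : ‖1 - Real.cos (t * x)‖ ≤ t ^ 2 * x ^ 2 := by
  rw [Real.norm_of_nonneg (sub_nonneg.2 (Real.cos_le_one _))]
  nlinarith [Real.one_sub_sq_div_two_le_cos (x := t * x), sq_nonneg (t * x)]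

/-- The exponent of the centered infinitely divisible law with Lévy measure `ν` and no Gaussian
part. -/
def levyExponent (ν : Measure ℝ) (t : ℝ) : ℂ := ∫ x, compensatedExp (t * x) ∂ν

/-- The drift by which the compensators `itx` and `itx / (1 + x²)` differ. -/
def levyDrift (ν : Measure ℝ) : ℝ := ∫ x, x ^ 3 / (1 + x ^ 2) ∂ν

section LevyExponent

variable {ν : Measure ℝ}

lemma integrable_compensatedExp_mul (hν : Integrable (fun x => x ^ 2) ν) (t : ℝ) :
    Integrable (fun x => compensatedExp (t * x)) ν :=
  (hν.const_mul (2 * t ^ 2)).mono' (by fun_prop) (.of_forall (norm_compensatedExp_mul_le t))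

lemma integrable_one_sub_cos_mul (hν : Integrable (fun x => x ^ 2) ν) (t : ℝ) :
    Integrable (fun x => 1 - Real.cos (t * x)) ν :=
  (hν.const_mul (t ^ 2)).mono' (by fun_prop) (.of_forall (norm_one_sub_cos_mul_le t))

lemma norm_levyExponent_le (hν : Integrable (fun x => x ^ 2) ν) (t : ℝ) :
    ‖levyExponent ν t‖ ≤ 2 * t ^ 2 * ∫ x, x ^ 2 ∂ν := by
  rw [← integral_const_mul]
  exact norm_integral_le_of_norm_le (hν.const_mul _) (.of_forall (norm_compensatedExp_mul_le t))

lemma continuousAt_zero_levyExponent (hν : Integrable (fun x => x ^ 2) ν) :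
    ContinuousAt (levyExponent ν) 0 := by
  have hzero : levyExponent ν 0 = 0 := by simp [levyExponent, compensatedExp]
  rw [ContinuousAt, hzero]
  refine squeeze_zero_norm (norm_levyExponent_le hν) ?_
  exact (Continuous.tendsto' (by fun_prop) 0 0 (by simp))

lemma integral_exp_sub_one_sub_div_eq (hν : Integrable (fun x => x ^ 2) ν) (t : ℝ) :
    ∫ x : ℝ, (Complex.exp (t * x * Complex.I) - 1 - (t * x * Complex.I) / (1 + (x : ℂ) ^ 2)) ∂ν =
      levyExponent ν t + t * levyDrift ν * Complex.I := by
  have hcube : Integrable (fun x : ℝ => x ^ 3 / (1 + x ^ 2)) ν := by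
    refine hν.mono' (Continuous.aestronglyMeasurable
      (Continuous.div (by fun_prop) (by fun_prop) fun x => by positivity)) (.of_forall fun x => ?_)
    rw [Real.norm_eq_abs, abs_div, abs_of_pos (by positivity : 0 < 1 + x ^ 2),
      div_le_iff₀ (by positivity), abs_pow, ← sq_abs x]
    nlinarith [sq_nonneg (|x| * (|x| - 1)), sq_nonneg |x|, sq_nonneg (|x| ^ 2)]
  have hcube' : Integrable (fun x : ℝ => t * Complex.I * ((x ^ 3 / (1 + x ^ 2) : ℝ) : ℂ)) ν :=
    hcube.ofReal.const_mul _
  have hdrift : t * levyDrift ν * Complex.I =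
      ∫ x : ℝ, t * Complex.I * ((x ^ 3 / (1 + x ^ 2) : ℝ) : ℂ) ∂ν := by
    rw [integral_const_mul, integral_complex_ofReal, levyDrift]
    ring
  rw [hdrift, levyExponent,
    ← integral_add (integrable_compensatedExp_mul hν t) hcube']
  refine integral_congr_ae (.of_forall fun x => ?_)
  have hx : 1 + (x : ℂ) ^ 2 ≠ 0 := by exact_mod_cast (by positivity : 1 + x ^ 2 ≠ 0)
  simp only [compensatedExp]
  push_cast
  field_simp
  ring

lemma re_levyExponent (hν : Integrable (fun x => x ^ 2) ν) (t : ℝ) :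
    (levyExponent ν t).re = -∫ x, (1 - Real.cos (t * x)) ∂ν := by
  rw [levyExponent, ← integral_neg]
  refine (integral_re (integrable_compensatedExp_mul hν t)).symm.trans ?_
  refine integral_congr_ae (.of_forall fun x => ?_)
  simp [compensatedExp, Complex.exp_ofReal_mul_I_re, -Complex.ofReal_mul]

lemma tendsto_integral_one_sub_cos_div_sq (hν : Integrable (fun x => x ^ 2) ν) :
    Tendsto (fun t => (∫ x, (1 - Real.cos (t * x)) ∂ν) / t ^ 2) atTop (𝓝 0) := by
  simp only [← integral_div]
  rw [← integral_zero ℝ ℝ (μ := ν)]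
  refine tendsto_integral_filter_of_dominated_convergence (fun x => x ^ 2)
    (.of_forall fun t => Continuous.aestronglyMeasurable (by fun_prop))
    ?_ hν (.of_forall fun x => ?_)
  · filter_upwards [eventually_gt_atTop 0] with t ht
    refine .of_forall fun x => ?_
    rw [norm_div, Real.norm_of_nonneg (sq_nonneg t), div_le_iff₀ (by positivity), mul_comm (x ^ 2)]
    exact norm_one_sub_cos_mul_le t x
  · refine squeeze_zero (fun t => ?_) (fun t => ?_)
      ((tendsto_pow_atTop two_ne_zero).const_div_atTop (2 : ℝ))
    · exact div_nonneg (sub_nonneg.2 (Real.cos_le_one _)) (sq_nonneg t)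
    · gcongr
      linarith [Real.neg_one_le_cos (t * x)]

lemma eq_zero_of_integral_one_sub_cos_eq_zero [NullSingletonClass ν]
    (hν : Integrable (fun x => x ^ 2) ν) (h : ∫ x, (1 - Real.cos x) ∂ν = 0) : ν = 0 := by
  have hint : Integrable (fun x => 1 - Real.cos x) ν := by
    simpa only [one_mul] using integrable_one_sub_cos_mul hν 1
  rw [integral_eq_zero_iff_of_nonneg (fun x => sub_nonneg.2 (Real.cos_le_one x)) hint] at h
  have hperiods : (Set.range fun n : ℤ => (n : ℝ) * (2 * π)).Countable := Set.countable_range _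
  rw [← ae_eq_bot, ← eventually_false_iff_eq_bot]
  filter_upwards [h, hperiods.ae_notMem ν] with x hcos hx
  exact hx ((Real.cos_eq_one_iff x).1 (sub_eq_zero.1 hcos).symm)

/-- The exponent of a Gaussian law is quadratic, while that of a law without Gaussian part is
`o(t²)`. -/
theorem ne_gaussianReal_of_charFun_eq_exp_levyExponent [NullSingletonClass ν]
    (hν : Integrable (fun x => x ^ 2) ν) (hν0 : ν ≠ 0)
    {G : Measure ℝ} {c : ℝ}
    (hG : ∀ t : ℝ, charFun G t = Complex.exp (levyExponent ν t + t * c * Complex.I))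
    (m : ℝ) (v : NNReal) : G ≠ ProbabilityTheory.gaussianReal m v := by
  rintro rfl
  have hquad (t : ℝ) : ∫ x, (1 - Real.cos (t * x)) ∂ν = v * t ^ 2 / 2 := by
    have hnorm := congrArg norm (hG t)
    have hreal : (v * (t : ℂ) ^ 2 / 2 : ℂ) = ((v * t ^ 2 / 2 : ℝ) : ℂ) := by push_cast; rfl
    rw [ProbabilityTheory.charFun_gaussianReal, Complex.norm_exp, Complex.norm_exp,
      Real.exp_eq_exp, hreal, Complex.sub_re, Complex.ofReal_re, Complex.add_re,
      re_levyExponent hν] at hnorm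
    simp only [Complex.mul_re, Complex.mul_im, Complex.ofReal_re, Complex.ofReal_im, Complex.I_re,
      Complex.I_im] at hnorm
    linarith
  have hv : (v : ℝ) / 2 = 0 := by
    refine tendsto_nhds_unique (tendsto_const_nhds.congr' ?_)
      (tendsto_integral_one_sub_cos_div_sq hν)
    filter_upwards [eventually_ne_atTop 0] with t ht
    rw [hquad]
    field_simp
  refine hν0 (eq_zero_of_integral_one_sub_cos_eq_zero hν ?_)
  simpa [hv] using hquad 1

end LevyExponent

/-! ### The Lévy measure as an image measure -/

/-- The measure `du / (π u)` on `(0, 1]`, whose density is invariant under dilations. -/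
def dilationMeasure : Measure ℝ :=
  (volume.restrict (Set.Ioc 0 1)).withDensity fun u => ENNReal.ofReal (1 / (π * u))

instance : SFinite dilationMeasure := by unfold dilationMeasure; infer_instance

lemma lintegral_eq_abs_mul_lintegral_comp_mul_right {s : ℝ} (hs : s ≠ 0) {g : ℝ → ENNReal}
    (hg : Measurable g) : ∫⁻ x, g x = ENNReal.ofReal |s| * ∫⁻ u, g (u * s) := by
  conv_lhs => rw [← Real.smul_map_volume_mul_right hs]
  rw [lintegral_smul_measure, lintegral_map hg (by fun_prop), smul_eq_mul]

lemma measurableSet_div_mem_Ioc (s : ℝ) : MeasurableSet {y : ℝ | y / s ∈ Set.Ioc 0 1} :=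
  measurableSet_Ioc.preimage (measurable_id.div_const s)

lemma dilationMeasure_preimage_mul_right {s : ℝ} (hs : s ≠ 0) {S : Set ℝ} (hS : MeasurableSet S) :
    dilationMeasure ((· * s) ⁻¹' S) =
      ∫⁻ x in S ∩ {y | y / s ∈ Set.Ioc 0 1}, ENNReal.ofReal (1 / (π * |x|)) := by
  have hSs : MeasurableSet ((· * s) ⁻¹' S) := hS.preimage (by fun_prop)
  have hT : MeasurableSet (S ∩ {y : ℝ | y / s ∈ Set.Ioc 0 1}) :=
    hS.inter (measurableSet_div_mem_Ioc s)
  have hpre : (· * s) ⁻¹' S ∩ Set.Ioc 0 1 = (· * s) ⁻¹' (S ∩ {y | y / s ∈ Set.Ioc 0 1}) := by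
    ext u
    simp only [Set.mem_inter_iff, Set.mem_preimage, Set.mem_ofPred_eq, mul_div_cancel_right₀ u hs]
  rw [dilationMeasure, withDensity_apply _ hSs, Measure.restrict_restrict hSs,
    ← lintegral_indicator hT, lintegral_eq_abs_mul_lintegral_comp_mul_right hs
      (Measurable.indicator (by fun_prop) hT), ← lintegral_const_mul' _ _ ENNReal.ofReal_ne_top,
    ← lintegral_indicator (hSs.inter measurableSet_Ioc)]
  refine lintegral_congr fun u => ?_
  by_cases hu : u ∈ (· * s) ⁻¹' S ∩ Set.Ioc 0 1
  · have hus : u * s ∈ S ∩ {y | y / s ∈ Set.Ioc 0 1} := hpre.subset hu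
    rw [Set.indicator_of_mem hu, Set.indicator_of_mem hus,
      ← ENNReal.ofReal_mul (abs_nonneg s), abs_mul, abs_of_pos hu.2.1]
    congr 1
    have := abs_pos.2 hs
    have := hu.2.1
    field_simp
  · have hus : u * s ∉ S ∩ {y | y / s ∈ Set.Ioc 0 1} := fun h => hu (hpre.superset h)
    rw [Set.indicator_of_notMem hu, Set.indicator_of_notMem hus, mul_zero]

lemma div_mem_Ioc_zero_one_iff_of_pos {x s : ℝ} (hx : 0 < x) : x / s ∈ Set.Ioc 0 1 ↔ x ≤ s := by
  constructor
  · rintro ⟨hpos, hle⟩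
    exact (div_le_one ((div_pos_iff_of_pos_left hx).1 hpos)).1 hle
  · intro h
    exact ⟨div_pos hx (hx.trans_le h), (div_le_one (hx.trans_le h)).2 h⟩

lemma div_mem_Ioc_zero_one_iff_of_neg {x s : ℝ} (hx : x < 0) : x / s ∈ Set.Ioc 0 1 ↔ s ≤ x := by
  rw [← neg_div_neg_eq, div_mem_Ioc_zero_one_iff_of_pos (neg_pos.2 hx), neg_le_neg_iff]

lemma abs_sinc_le_inv {v : ℝ} (hv : 0 < v) : |Real.sinc v| ≤ v⁻¹ := by
  rw [Real.sinc_of_ne_zero hv.ne', abs_div, abs_of_pos hv, ← one_div]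
  gcongr
  exact Real.abs_sin_le_one v

lemma volume_setOf_le_abs_sinc_lt_top {x : ℝ} (hx : 0 < x) :
    volume {v : ℝ | 0 < v ∧ x ≤ |Real.sinc v|} < ⊤ := by
  refine (measure_mono (t := Set.Icc 0 x⁻¹) ?_).trans_lt measure_Icc_lt_top
  rintro v ⟨hv, h⟩
  exact ⟨hv.le, (le_inv_comm₀ hx hv).1 (h.trans (abs_sinc_le_inv hv))⟩

lemma volume_setOf_le_sinc {x : ℝ} (hx : 0 < x) :
    volume {v : ℝ | 0 < v ∧ x ≤ Real.sinc v} = ENNReal.ofReal (Ffun x) := by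
  have hset : {v : ℝ | 0 < v ∧ x ≤ Real.sin v / v} = {v : ℝ | 0 < v ∧ x ≤ Real.sinc v} :=
    Set.ext fun v => and_congr_right fun hv => by rw [Real.sinc_of_ne_zero hv.ne']
  rw [Ffun, hset, ENNReal.ofReal_toReal (ne_top_of_le_ne_top
    (volume_setOf_le_abs_sinc_lt_top hx).ne (measure_mono fun v hv => ?_))]
  exact ⟨hv.1, hv.2.trans (le_abs_self _)⟩

lemma volume_setOf_sinc_le_neg {x : ℝ} (hx : 0 < x) :
    volume {v : ℝ | 0 < v ∧ Real.sinc v ≤ -x} = ENNReal.ofReal (G0fun x) := by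
  have hset : {v : ℝ | 0 < v ∧ Real.sin v / v ≤ -x} = {v : ℝ | 0 < v ∧ Real.sinc v ≤ -x} :=
    Set.ext fun v => and_congr_right fun hv => by rw [Real.sinc_of_ne_zero hv.ne']
  rw [G0fun, hset, ENNReal.ofReal_toReal (ne_top_of_le_ne_top
    (volume_setOf_le_abs_sinc_lt_top hx).ne (measure_mono fun v hv => ?_))]
  exact ⟨hv.1, le_abs.2 (Or.inr (le_neg_of_le_neg hv.2))⟩

lemma Ffun_eq_zero_of_one_lt {x : ℝ} (hx : 1 < x) : Ffun x = 0 := by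
  have h := volume_setOf_le_sinc (zero_lt_one.trans hx)
  have hempty : {v : ℝ | 0 < v ∧ x ≤ Real.sinc v} = ∅ :=
    Set.eq_empty_of_forall_notMem fun v hv => (hv.2.trans (Real.sinc_le_one v)).not_gt hx
  rw [hempty, measure_empty] at h
  exact le_antisymm (ENNReal.ofReal_eq_zero.1 h.symm) ENNReal.toReal_nonneg

lemma G0fun_eq_zero_of_one_lt {x : ℝ} (hx : 1 < x) : G0fun x = 0 := by
  have h := volume_setOf_sinc_le_neg (zero_lt_one.trans hx)
  have hempty : {v : ℝ | 0 < v ∧ Real.sinc v ≤ -x} = ∅ :=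
    Set.eq_empty_of_forall_notMem fun v hv => by linarith [hv.2, Real.neg_one_le_sinc v]
  rw [hempty, measure_empty] at h
  exact le_antisymm (ENNReal.ofReal_eq_zero.1 h.symm) ENNReal.toReal_nonneg

lemma levyDensity_of_pos {x : ℝ} (hx : 0 < x) : levyDensity x = 1 / (π * |x|) * Ffun x := by
  rw [levyDensity, abs_of_pos hx]
  rcases le_or_gt x 1 with h | h
  · rw [if_pos ⟨hx, h⟩]; ring
  · rw [if_neg fun hc => h.not_ge hc.2, if_neg fun hc => hx.not_gt hc.2,
      Ffun_eq_zero_of_one_lt h, mul_zero]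

lemma levyDensity_of_neg {x : ℝ} (hx : x < 0) : levyDensity x = 1 / (π * |x|) * G0fun (-x) := by
  rw [levyDensity, abs_of_neg hx, if_neg fun hc => hx.not_gt hc.1]
  rcases le_or_gt (-1) x with h | h
  · rw [if_pos ⟨h, hx⟩]; ring
  · rw [if_neg fun hc => h.not_ge hc.1, G0fun_eq_zero_of_one_lt (by linarith), mul_zero]

lemma ofReal_levyDensity {x : ℝ} (hx : x ≠ 0) :
    ENNReal.ofReal (levyDensity x) = ENNReal.ofReal (1 / (π * |x|)) *
      volume {v : ℝ | 0 < v ∧ x / Real.sinc v ∈ Set.Ioc 0 1} := by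
  rcases lt_or_gt_of_ne hx with h | h
  · rw [levyDensity_of_neg h, ENNReal.ofReal_mul (by positivity),
      ← volume_setOf_sinc_le_neg (neg_pos.2 h)]
    simp only [div_mem_Ioc_zero_one_iff_of_neg h, neg_neg]
  · rw [levyDensity_of_pos h, ENNReal.ofReal_mul (by positivity), ← volume_setOf_le_sinc h]
    simp only [div_mem_Ioc_zero_one_iff_of_pos h]

lemma ae_sinc_ne_zero : ∀ᵐ v : ℝ, Real.sinc v ≠ 0 := by
  have hzeros : (Set.range fun n : ℤ => (n : ℝ) * π).Countable := Set.countable_range _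
  filter_upwards [hzeros.ae_notMem volume, Measure.ae_ne volume 0] with v hv hv0 h
  rw [Real.sinc_of_ne_zero hv0, div_eq_zero_iff, or_iff_left hv0] at h
  exact hv (Real.sin_eq_zero_iff.1 h)

lemma measurable_mul_sinc : Measurable fun p : ℝ × ℝ => p.1 * Real.sinc p.2 :=
  measurable_fst.mul (measurable_sinc.comp measurable_snd)

/-- The substitution `x = u sinc v` at fixed `v`, followed by integration over `v`. -/
theorem levyMeasure_eq_map : levyMeasure =
    (dilationMeasure.prod (volume.restrict (Set.Ioi 0))).map
      fun p : ℝ × ℝ => p.1 * Real.sinc p.2 := by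
  ext S hS
  let g : ℝ × ℝ → ENNReal := {p : ℝ × ℝ | p.1 / Real.sinc p.2 ∈ Set.Ioc 0 1}.indicator
    fun p => ENNReal.ofReal (1 / (π * |p.1|))
  have hratio : MeasurableSet {p : ℝ × ℝ | p.1 / Real.sinc p.2 ∈ Set.Ioc 0 1} :=
    measurableSet_Ioc.preimage (measurable_fst.div (measurable_sinc.comp measurable_snd))
  have hg : Measurable g := Measurable.indicator (by fun_prop) hratio
  have hinner (x : ℝ) : ∫⁻ v in Set.Ioi 0, g (x, v) = ENNReal.ofReal (1 / (π * |x|)) *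
      volume {v : ℝ | 0 < v ∧ x / Real.sinc v ∈ Set.Ioc 0 1} := by
    have hsec := measurable_prodMk_left (x := x) hratio
    change ∫⁻ v in Set.Ioi 0, (Prod.mk x ⁻¹' {p : ℝ × ℝ | p.1 / Real.sinc p.2 ∈
      Set.Ioc 0 1}).indicator (fun _ => ENNReal.ofReal (1 / (π * |x|))) v = _
    rw [lintegral_indicator_const hsec, Measure.restrict_apply hsec, Set.inter_comm]
    rfl
  calc levyMeasure S
      = ∫⁻ x in S, ∫⁻ v in Set.Ioi 0, g (x, v) := by
        rw [levyMeasure, withDensity_apply _ hS]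
        exact lintegral_congr_ae (ae_restrict_of_ae ((Measure.ae_ne volume 0).mono
          fun x hx => (ofReal_levyDensity hx).trans (hinner x).symm))
    _ = ∫⁻ v in Set.Ioi 0, ∫⁻ x in S, g (x, v) := lintegral_lintegral_swap hg.aemeasurable
    _ = ∫⁻ v in Set.Ioi 0, dilationMeasure ((· * Real.sinc v) ⁻¹' S) := by
        refine lintegral_congr_ae (ae_restrict_of_ae (ae_sinc_ne_zero.mono fun v hv => ?_))
        beta_reduce
        rw [dilationMeasure_preimage_mul_right hv hS, Set.inter_comm,
          ← Measure.restrict_restrict (measurableSet_div_mem_Ioc _),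
          ← lintegral_indicator (measurableSet_div_mem_Ioc _)]
        rfl
    _ = _ := by
        rw [Measure.map_apply measurable_mul_sinc hS,
          Measure.prod_apply_symm (measurable_mul_sinc hS)]
        rfl

lemma dilationMeasure_ne_zero : dilationMeasure ≠ 0 := by
  intro h
  have hIoc : volume.restrict (Set.Ioc (0 : ℝ) 1) = 0 := by
    rw [← ae_eq_bot, ← eventually_false_iff_eq_bot]
    filter_upwards [withDensity_eq_zero (by fun_prop) h, ae_restrict_mem measurableSet_Ioc]
      with u hzero hu
    have := hu.1
    exact (ENNReal.ofReal_pos.2 (by positivity : 0 < 1 / (π * u))).ne' hzero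
  simp [Measure.restrict_eq_zero] at hIoc

instance : NullSingletonClass levyMeasure := by unfold levyMeasure; infer_instance

lemma levyMeasure_ne_zero : levyMeasure ≠ 0 := by
  have hIoi : volume.restrict (Set.Ioi (0 : ℝ)) ≠ 0 := by
    simp [Measure.restrict_eq_zero]
  rw [levyMeasure_eq_map, Ne, Measure.map_eq_zero_iff measurable_mul_sinc.aemeasurable,
    ← Measure.measure_univ_eq_zero, ← Set.univ_prod_univ, Measure.prod_prod, mul_eq_zero,
    Measure.measure_univ_eq_zero, Measure.measure_univ_eq_zero]
  exact not_or_intro dilationMeasure_ne_zero hIoi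

lemma sinc_sq_le {v : ℝ} (hv : 0 < v) : Real.sinc v ^ 2 ≤ 2 * (1 + v ^ 2)⁻¹ := by
  have hone : |Real.sinc v| ^ 2 ≤ 1 := pow_le_one₀ (abs_nonneg _) (Real.abs_sinc_le_one v)
  have hinv : |Real.sinc v| * v ≤ 1 := (le_mul_inv_iff₀ hv).1 (by simpa using abs_sinc_le_inv hv)
  have hinv_sq : (|Real.sinc v| * v) ^ 2 ≤ 1 := pow_le_one₀ (by positivity) hinv
  rw [← div_eq_mul_inv, le_div_iff₀ (by positivity), ← sq_abs]
  linarith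

lemma integrableOn_sinc_sq : IntegrableOn (fun v => Real.sinc v ^ 2) (Set.Ioi 0) := by
  refine (integrable_inv_one_add_sq.const_mul 2).integrableOn.mono'
    (Real.continuous_sinc.pow 2).aestronglyMeasurable ?_
  filter_upwards [ae_restrict_mem measurableSet_Ioi] with v hv
  rw [Real.norm_of_nonneg (sq_nonneg _)]
  exact sinc_sq_le hv

lemma integrable_sq_dilationMeasure : Integrable (fun u => u ^ 2) dilationMeasure := by
  rw [dilationMeasure, integrable_withDensity_iff_integrable_smul' (by fun_prop) (by simp)]
  have hlin : IntegrableOn (fun u : ℝ => u / π) (Set.Ioc 0 1) :=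
    (Continuous.integrableOn_Icc (by fun_prop)).mono_set Set.Ioc_subset_Icc_self
  refine hlin.congr ?_
  filter_upwards [ae_restrict_mem measurableSet_Ioc] with u hu
  have := hu.1
  rw [ENNReal.toReal_ofReal (by positivity), smul_eq_mul]
  field_simp

lemma integrable_sq_levyMeasure : Integrable (fun x => x ^ 2) levyMeasure := by
  rw [levyMeasure_eq_map,
    integrable_map_measure (by fun_prop) measurable_mul_sinc.aemeasurable]
  refine (integrable_sq_dilationMeasure.mul_prod integrableOn_sinc_sq).congr
    (.of_forall fun p => ?_)
  exact (mul_pow _ _ _).symm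

lemma levyExponent_levyMeasure (t : ℝ) :
    levyExponent levyMeasure t = ∫ u in (0 : ℝ)..1, ((1 / (π * u) : ℝ) : ℂ) *
      ∫ v in Set.Ioi 0, compensatedExp (t * (u * Real.sinc v)) := by
  have hmeas (μ : Measure ℝ) : AEStronglyMeasurable (fun x => compensatedExp (t * x)) μ :=
    Continuous.aestronglyMeasurable (by fun_prop)
  have hint := integrable_compensatedExp_mul integrable_sq_levyMeasure t
  rw [levyMeasure_eq_map,
    integrable_map_measure (hmeas _) measurable_mul_sinc.aemeasurable] at hint
  rw [levyExponent, levyMeasure_eq_map,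
    integral_map measurable_mul_sinc.aemeasurable (hmeas _)]
  refine (integral_prod _ hint).trans ?_
  rw [dilationMeasure, integral_withDensity_eq_integral_toReal_smul (by fun_prop) (by simp),
    intervalIntegral.integral_of_le zero_le_one]
  refine setIntegral_congr_fun measurableSet_Ioc fun u hu => ?_
  have := hu.1
  rw [ENNReal.toReal_ofReal (by positivity), Complex.real_smul]
  rfl

/-! ### Sums of cosines over arithmetic progressions -/

/-- The sum `∑_{j=1}^l cos (2π j θ)` over a block of `l` frequencies. -/
def cosSum (l : ℕ) (θ : ℝ) : ℝ := ∑ j ∈ Finset.range l, Real.cos (2 * π * (j + 1) * θ)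

@[fun_prop]
lemma continuous_cosSum (l : ℕ) : Continuous (cosSum l) := by unfold cosSum; fun_prop

lemma abs_cosSum_le (l : ℕ) (θ : ℝ) : |cosSum l θ| ≤ l := by
  refine (Finset.abs_sum_le_sum_abs _ _).trans ?_
  refine (Finset.sum_le_card_nsmul _ _ 1 fun j _ => Real.abs_cos_le_one _).trans_eq ?_
  rw [Finset.card_range, nsmul_one]

lemma two_mul_sin_mul_cosSum (l : ℕ) (θ : ℝ) :
    2 * Real.sin (π * θ) * cosSum l θ = Real.sin ((2 * l + 1) * (π * θ)) - Real.sin (π * θ) := by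
  induction l with
  | zero => simp [cosSum]
  | succ n ih =>
    have hright : (2 * ((n + 1 : ℕ) : ℝ) + 1) * (π * θ) = 2 * π * (n + 1) * θ + π * θ := by
      push_cast; ring
    have hleft : (2 * (n : ℝ) + 1) * (π * θ) = 2 * π * (n + 1) * θ - π * θ := by ring
    rw [cosSum, Finset.sum_range_succ, ← cosSum, mul_add, ih, hright, hleft, Real.sin_add,
      Real.sin_sub]
    ring

lemma abs_cosSum_le_inv (l : ℕ) {θ : ℝ} (hpos : 0 < θ) (hle : θ ≤ 1 / 2) :
    |cosSum l θ| ≤ 1 / (2 * θ) := by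
  have hsin : 2 * θ ≤ Real.sin (π * θ) := by
    have h := Real.mul_le_sin (x := π * θ) (by positivity) (by nlinarith [pi_pos])
    rwa [← mul_assoc, div_mul_cancel₀ _ pi_ne_zero] at h
  have hdirichlet := congrArg abs (two_mul_sin_mul_cosSum l θ)
  rw [abs_mul, abs_of_pos (by linarith : 0 < 2 * Real.sin (π * θ))] at hdirichlet
  have htwo : |Real.sin ((2 * l + 1) * (π * θ)) - Real.sin (π * θ)| ≤ 2 := by
    refine (abs_sub _ _).trans ?_
    linarith [Real.abs_sin_le_one ((2 * l + 1) * (π * θ)), Real.abs_sin_le_one (π * θ)]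
  rw [le_div_iff₀ (by positivity)]
  nlinarith [abs_nonneg (cosSum l θ)]

lemma cosSum_periodic (l : ℕ) : Function.Periodic (cosSum l) 1 := by
  refine fun θ => Finset.sum_congr rfl fun j _ => ?_
  have hshift : 2 * π * (j + 1) * (θ + 1) = 2 * π * (j + 1) * θ + ((j + 1 : ℕ) : ℝ) * (2 * π) := by
    push_cast; ring
  rw [hshift, Real.cos_add_nat_mul_two_pi]

lemma cosSum_one_sub (l : ℕ) (θ : ℝ) : cosSum l (1 - θ) = cosSum l θ := by
  rw [sub_eq_neg_add, cosSum_periodic l]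
  simp only [cosSum, mul_neg, Real.cos_neg]

lemma lipschitzWith_cosSum (l : ℕ) : LipschitzWith (2 * NNReal.pi * l ^ 2) (cosSum l) := by
  refine LipschitzWith.of_dist_le_mul fun x y => ?_
  have hterm : ∀ j ∈ Finset.range l,
      |Real.cos (2 * π * (j + 1) * x) - Real.cos (2 * π * (j + 1) * y)| ≤
        2 * π * l * |x - y| := by
    intro j hj
    refine (Real.abs_cos_sub_cos_le _ _).trans ?_
    rw [← mul_sub, abs_mul, abs_of_pos (by positivity)]
    gcongr
    exact_mod_cast Finset.mem_range.1 hj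
  rw [Real.dist_eq, Real.dist_eq, cosSum, cosSum, ← Finset.sum_sub_distrib]
  refine ((Finset.abs_sum_le_sum_abs _ _).trans (Finset.sum_le_card_nsmul _ _ _ hterm)).trans_eq ?_
  rw [Finset.card_range, nsmul_eq_mul]
  push_cast [NNReal.coe_real_pi]
  ring

lemma integral_comp_cosSum {E : Type*} [NormedAddCommGroup E] [NormedSpace ℝ E] (l : ℕ)
    {f : ℝ → E} (hf : Continuous f) :
    ∫ θ in (0 : ℝ)..1, f (cosSum l θ) = (2 : ℝ) • ∫ θ in (0 : ℝ)..(1 / 2), f (cosSum l θ) := by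
  have hint (a b : ℝ) : IntervalIntegrable (fun θ => f (cosSum l θ)) volume a b :=
    Continuous.intervalIntegrable (by fun_prop) a b
  have hsymm := intervalIntegral.integral_comp_sub_left (a := 0) (b := 1 / 2)
    (fun θ => f (cosSum l θ)) 1
  simp only [cosSum_one_sub] at hsymm
  rw [← intervalIntegral.integral_add_adjacent_intervals (hint 0 (1 / 2)) (hint (1 / 2) 1),
    two_smul]
  nth_rw 3 [hsymm]
  norm_num

/-- Interpolates between `|cosSum l θ| ≤ l` and `|cosSum l θ| ≤ 1 / θ`. The true order is `log l`;
any power of `l` below `1/2` suffices. -/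
lemma integral_abs_cosSum_le (l : ℕ) :
    ∫ θ in (0 : ℝ)..1, |cosSum l θ| ≤ 8 * (l : ℝ) ^ (1 / 4 : ℝ) := by
  have hinterp : ∀ θ ∈ Set.Ioo (0 : ℝ) (1 / 2),
      |cosSum l θ| ≤ (l : ℝ) ^ (1 / 4 : ℝ) * θ ^ (-(3 / 4) : ℝ) := by
    rintro θ ⟨hpos, hlt⟩
    have hinv : |cosSum l θ| ≤ θ⁻¹ := by
      refine (abs_cosSum_le_inv l hpos hlt.le).trans ?_
      rw [← one_div]
      gcongr
      linarith
    calc |cosSum l θ| = |cosSum l θ| ^ (1 / 4 : ℝ) * |cosSum l θ| ^ (3 / 4 : ℝ) := by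
          rw [← Real.rpow_add_of_nonneg (abs_nonneg _) (by norm_num) (by norm_num)]
          norm_num
      _ ≤ (l : ℝ) ^ (1 / 4 : ℝ) * θ⁻¹ ^ (3 / 4 : ℝ) := by
          gcongr
          exact abs_cosSum_le l θ
      _ = (l : ℝ) ^ (1 / 4 : ℝ) * θ ^ (-(3 / 4) : ℝ) := by
          rw [Real.inv_rpow hpos.le, Real.rpow_neg hpos.le]
  have hrpow : ∫ θ in (0 : ℝ)..(1 / 2), θ ^ (-(3 / 4) : ℝ) ≤ 4 := by
    rw [integral_rpow (Or.inl (by norm_num)), Real.zero_rpow (by norm_num),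
      div_le_iff₀ (by norm_num)]
    linarith [Real.rpow_le_one (x := 1 / 2) (z := -(3 / 4) + 1) (by norm_num) (by norm_num)
      (by norm_num)]
  rw [integral_comp_cosSum l continuous_abs, smul_eq_mul]
  calc 2 * ∫ θ in (0 : ℝ)..(1 / 2), |cosSum l θ|
      ≤ 2 * ∫ θ in (0 : ℝ)..(1 / 2), (l : ℝ) ^ (1 / 4 : ℝ) * θ ^ (-(3 / 4) : ℝ) := by
        gcongr
        exact intervalIntegral.integral_mono_on_of_le_Ioo (by norm_num)
          (Continuous.intervalIntegrable (by fun_prop) _ _)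
          ((intervalIntegral.intervalIntegrable_rpow' (by norm_num)).const_mul _) hinterp
    _ ≤ 2 * ((l : ℝ) ^ (1 / 4 : ℝ) * 4) := by
        rw [intervalIntegral.integral_const_mul]
        gcongr
    _ = 8 * (l : ℝ) ^ (1 / 4 : ℝ) := by ring

lemma integral_cosSum (l : ℕ) : ∫ θ in (0 : ℝ)..1, cosSum l θ = 0 := by
  unfold cosSum
  rw [intervalIntegral.integral_finsetSum fun j _ =>
    Continuous.intervalIntegrable (by fun_prop) _ _]
  refine Finset.sum_eq_zero fun j _ => ?_
  have hperiod : 2 * π * ((j : ℝ) + 1) * 1 = ((2 * (j + 1) : ℕ) : ℝ) * π := by push_cast; ring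
  rw [intervalIntegral.integral_comp_mul_left Real.cos (by positivity), integral_cos, hperiod,
    Real.sin_nat_mul_pi, mul_zero, Real.sin_zero, sub_zero, smul_zero]

/-- The block sum on the scale `θ = v / (2π l)` of its central peak, divided by its maximum `l`. -/
def scaledCosSum (l : ℕ) (v : ℝ) : ℝ := cosSum l (v / (2 * π * l)) / l

@[fun_prop]
lemma continuous_scaledCosSum (l : ℕ) : Continuous (scaledCosSum l) := by
  unfold scaledCosSum; fun_prop

/-- The range `v ≤ π l` corresponds to `θ ≤ 1/2`. -/
lemma scaledCosSum_sq_le (l : ℕ) {v : ℝ} (hv : 0 < v) (hvl : v ≤ π * l) :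
    scaledCosSum l v ^ 2 ≤ (1 + π ^ 2) * (1 + v ^ 2)⁻¹ := by
  have hl : (0 : ℝ) < l := pos_of_mul_pos_right (hv.trans_le hvl) pi_pos.le
  have hone : |scaledCosSum l v| ≤ 1 := by
    rw [scaledCosSum, abs_div, Nat.abs_cast, div_le_one hl]
    exact abs_cosSum_le _ _
  have hinv : |scaledCosSum l v| * v ≤ π := by
    have h := abs_cosSum_le_inv l (θ := v / (2 * π * l)) (by positivity)
      (by rw [div_le_iff₀ (by positivity)]; linarith)
    rw [show 1 / (2 * (v / (2 * π * l))) = π * l / v by field_simp, le_div_iff₀ hv] at h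
    rwa [scaledCosSum, abs_div, Nat.abs_cast, div_mul_eq_mul_div, div_le_iff₀ hl]
  have hone_sq : |scaledCosSum l v| ^ 2 ≤ 1 := pow_le_one₀ (abs_nonneg _) hone
  have hinv_sq : (|scaledCosSum l v| * v) ^ 2 ≤ π ^ 2 := by gcongr
  rw [← div_eq_mul_inv, le_div_iff₀ (by positivity), ← sq_abs]
  linarith

lemma scaledCosSum_mul_sinc {l : ℕ} (hl : l ≠ 0) (v : ℝ) :
    scaledCosSum l v * (v * Real.sinc (v / (2 * l))) =
      Real.sin (v + v / (2 * l)) - Real.sin (v / (2 * l)) := by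
  have hl' : (l : ℝ) ≠ 0 := Nat.cast_ne_zero.2 hl
  rcases eq_or_ne v 0 with rfl | hv
  · simp
  have hangle : π * (v / (2 * π * l)) = v / (2 * l) := by field_simp
  have h := two_mul_sin_mul_cosSum l (v / (2 * π * l))
  rw [hangle, show (2 * l + 1) * (v / (2 * l)) = v + v / (2 * l) by field_simp] at h
  rw [← h, scaledCosSum, Real.sinc_of_ne_zero (by positivity)]
  field_simp

lemma tendsto_scaledCosSum {v : ℝ} (hv : v ≠ 0) :
    Tendsto (fun l => scaledCosSum l v) atTop (𝓝 (Real.sinc v)) := by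
  have hangle : Tendsto (fun l : ℕ => v / (2 * (l : ℝ))) atTop (𝓝 0) :=
    (tendsto_natCast_atTop_atTop.const_mul_atTop two_pos).const_div_atTop v
  have hnum : Tendsto (fun l : ℕ => Real.sin (v + v / (2 * l)) - Real.sin (v / (2 * l))) atTop
      (𝓝 (Real.sin v)) := by
    simpa using (((Real.continuous_sin.tendsto _).comp (hangle.const_add v)).sub
      ((Real.continuous_sin.tendsto _).comp hangle))
  have hden : Tendsto (fun l : ℕ => v * Real.sinc (v / (2 * l))) atTop (𝓝 v) := by
    simpa using ((Real.continuous_sinc.tendsto _).comp hangle).const_mul v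
  rw [Real.sinc_of_ne_zero hv]
  refine (hnum.div hden hv).congr' ?_
  filter_upwards [hden.eventually_ne hv, eventually_ne_atTop 0] with l hne hl
  exact (eq_div_of_mul_eq hne (scaledCosSum_mul_sinc hl v)).symm

/-! ### Sums as integrals of step functions -/

section StepFunctions

variable {E : Type*} [NormedAddCommGroup E] [NormedSpace ℝ E] [CompleteSpace E]

lemma sum_range_eq_integral_floor (K : ℕ) (a : ℕ → E) :
    ∑ i ∈ Finset.range K, a i = ∫ u in (0 : ℝ)..1, (K : ℝ) • a ⌊K * u⌋₊ := by
  have hpiece (i : ℕ) : Set.EqOn (fun x : ℝ => a ⌊x⌋₊) (fun _ => a i)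
      (Set.Ioo (i : ℝ) (i + 1 : ℕ)) := fun x hx => by
    have hfloor : ⌊x⌋₊ = i := (Nat.floor_eq_iff ((Nat.cast_nonneg i).trans hx.1.le)).2
      ⟨hx.1.le, by exact_mod_cast hx.2⟩
    exact congrArg a hfloor
  have hle (i : ℕ) : (i : ℝ) ≤ (i + 1 : ℕ) := by push_cast; linarith
  have hint (i : ℕ) : IntervalIntegrable (fun x : ℝ => a ⌊x⌋₊) volume i (i + 1 : ℕ) := by
    rw [intervalIntegrable_iff_integrableOn_Ioo_of_le (hle i)]
    exact (integrableOn_const (by simp)).congr_fun (hpiece i).symm measurableSet_Ioo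
  have hval (i : ℕ) : ∫ x in (i : ℝ)..(i + 1 : ℕ), a ⌊x⌋₊ = a i := by
    rw [intervalIntegral.integral_of_le (hle i), integral_Ioc_eq_integral_Ioo,
      setIntegral_congr_fun measurableSet_Ioo (hpiece i), ← integral_Ioc_eq_integral_Ioo,
      ← intervalIntegral.integral_of_le (hle i), intervalIntegral.integral_const]
    simp
  rw [intervalIntegral.integral_smul,
    intervalIntegral.smul_integral_comp_mul_left (fun x : ℝ => a ⌊x⌋₊), mul_zero, mul_one,
    ← Nat.cast_zero, ← intervalIntegral.sum_integral_adjacent_intervals fun i _ => hint i]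
  exact Finset.sum_congr rfl fun i _ => (hval i).symm

lemma tendsto_sum_range_of_tendsto_floor {K : ℕ → ℕ} {c : ℕ → ℕ → E} {h : ℝ → E} {B : ℝ}
    (hlim : ∀ u ∈ Set.Ioo (0 : ℝ) 1,
      Tendsto (fun N => (K N : ℝ) • c N ⌊K N * u⌋₊) atTop (𝓝 (h u)))
    (hB : ∀ᶠ N in atTop, ∀ i < K N, ‖(K N : ℝ) • c N i‖ ≤ B) :
    Tendsto (fun N => ∑ i ∈ Finset.range (K N), c N i) atTop (𝓝 (∫ u in (0 : ℝ)..1, h u)) := by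
  simp_rw [sum_range_eq_integral_floor]
  refine intervalIntegral.tendsto_integral_filter_of_dominated_convergence (fun _ => max B 0)
    (Eventually.of_forall fun N => ?_) ?_ intervalIntegrable_const ?_
  · have hfloor : Measurable fun u : ℝ => ⌊K N * u⌋₊ := Nat.measurable_floor.comp (by fun_prop)
    exact ((StronglyMeasurable.of_discrete (f := c N)).comp_measurable
      hfloor).aestronglyMeasurable.const_smul _
  · filter_upwards [hB] with N hN
    filter_upwards [Measure.ae_ne volume 1] with u hu1 hu
    rw [Set.uIoc_of_le zero_le_one] at hu
    rcases (K N).eq_zero_or_pos with hK | hK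
    · simp [hK]
    refine (hN _ ((Nat.floor_lt (by have := hu.1; positivity)).2 ?_)).trans (le_max_left _ _)
    have hKr : (0 : ℝ) < K N := Nat.cast_pos.2 hK
    nlinarith [lt_of_le_of_ne hu.2 hu1]
  · filter_upwards [Measure.ae_ne volume 1] with u hu1 hu
    rw [Set.uIoc_of_le zero_le_one] at hu
    exact hlim u ⟨hu.1, lt_of_le_of_ne hu.2 hu1⟩

end StepFunctions

lemma tendsto_floor_mul_add_one_div {K : ℕ → ℕ} (hK : Tendsto K atTop atTop) {u : ℝ}
    (hu : 0 ≤ u) : Tendsto (fun N => ((⌊K N * u⌋₊ + 1 : ℕ) : ℝ) / K N) atTop (𝓝 u) := by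
  have hKr : Tendsto (fun N => (K N : ℝ)) atTop atTop := tendsto_natCast_atTop_atTop.comp hK
  have hfloor := (tendsto_nat_floor_mul_div_atTop hu).comp hKr
  simpa [add_div, mul_comm, Function.comp_def] using hfloor.add (tendsto_inv_atTop_zero.comp hKr)

lemma tendsto_floor_mul_add_one {K : ℕ → ℕ} (hK : Tendsto K atTop atTop) {u : ℝ} (hu : 0 < u) :
    Tendsto (fun N => ⌊K N * u⌋₊ + 1) atTop atTop :=
  tendsto_atTop_mono (fun _ => Nat.le_succ _) (tendsto_nat_floor_atTop.comp
    ((tendsto_natCast_atTop_atTop.comp hK).atTop_mul_const hu))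

/-! ### Characteristic functions of block sums -/

/-- The characteristic function of `cosSum l θ` for `θ` uniformly distributed on `(0, 1)`. -/
def blockCharFun (l : ℕ) (s : ℝ) : ℂ :=
  ∫ θ in (0 : ℝ)..1, Complex.exp ((s * cosSum l θ : ℝ) * Complex.I)

/-- The limit of `π l (blockCharFun l (y / l) - 1)` is `∫ v in Ioi 0, compensatedExp (y * sinc v)`;
this is the quantity before the limit, on the scale of `scaledCosSum`. -/
def blockExponent (l : ℕ) (y : ℝ) : ℂ :=
  ∫ v in Set.Ioc 0 (π * l), compensatedExp (y * scaledCosSum l v)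

lemma norm_compensatedExp_mul_scaledCosSum_le {l : ℕ} {v : ℝ} (hv : v ∈ Set.Ioc 0 (π * l))
    (y : ℝ) : ‖compensatedExp (y * scaledCosSum l v)‖ ≤
      2 * y ^ 2 * ((1 + π ^ 2) * (1 + v ^ 2)⁻¹) := by
  refine (norm_compensatedExp_mul_le y _).trans ?_
  gcongr
  exact scaledCosSum_sq_le l hv.1 hv.2

lemma norm_blockExponent_le (l : ℕ) (y : ℝ) :
    ‖blockExponent l y‖ ≤ π * (1 + π ^ 2) * y ^ 2 := by
  have hint : Integrable (fun v : ℝ => 2 * y ^ 2 * ((1 + π ^ 2) * (1 + v ^ 2)⁻¹)) :=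
    (integrable_inv_one_add_sq.const_mul _).const_mul _
  calc ‖blockExponent l y‖
      ≤ ∫ v in Set.Ioc 0 (π * l), 2 * y ^ 2 * ((1 + π ^ 2) * (1 + v ^ 2)⁻¹) :=
        norm_integral_le_of_norm_le hint.integrableOn
          ((ae_restrict_iff' measurableSet_Ioc).2 (Eventually.of_forall fun v hv =>
            norm_compensatedExp_mul_scaledCosSum_le hv y))
    _ ≤ ∫ v in Set.Ioi 0, 2 * y ^ 2 * ((1 + π ^ 2) * (1 + v ^ 2)⁻¹) :=
        setIntegral_mono_set hint.integrableOn (Eventually.of_forall fun v => by positivity)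
          (Eventually.of_forall fun v hv => hv.1)
    _ = π * (1 + π ^ 2) * y ^ 2 := by
        rw [integral_const_mul, integral_const_mul, integral_Ioi_inv_one_add_sq, Real.arctan_zero]
        ring

lemma tendsto_blockExponent {l : ℕ → ℕ} (hl : Tendsto l atTop atTop) {y : ℕ → ℝ} {y₀ : ℝ}
    (hy : Tendsto y atTop (𝓝 y₀)) :
    Tendsto (fun N => blockExponent (l N) (y N)) atTop
      (𝓝 (∫ v in Set.Ioi 0, compensatedExp (y₀ * Real.sinc v))) := by
  have hextend (N : ℕ) : blockExponent (l N) (y N) = ∫ v in Set.Ioi 0,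
      (Set.Ioc 0 (π * l N)).indicator (fun v => compensatedExp (y N * scaledCosSum (l N) v)) v := by
    rw [integral_indicator measurableSet_Ioc, Measure.restrict_restrict measurableSet_Ioc,
      Set.inter_eq_left.2 Set.Ioc_subset_Ioi_self, blockExponent]
  have hsq : ∀ᶠ N in atTop, y N ^ 2 ≤ y₀ ^ 2 + 1 := (hy.pow 2).eventually_le_const (by linarith)
  have hrange : Tendsto (fun N => π * (l N : ℝ)) atTop atTop :=
    (tendsto_natCast_atTop_atTop.comp hl).const_mul_atTop pi_pos
  simp_rw [hextend]
  refine tendsto_integral_filter_of_dominated_convergence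
    (fun v => 2 * (y₀ ^ 2 + 1) * ((1 + π ^ 2) * (1 + v ^ 2)⁻¹)) ?_ ?_ ?_ ?_
  · exact Eventually.of_forall fun N => AEStronglyMeasurable.indicator
      (Continuous.aestronglyMeasurable (by fun_prop)) measurableSet_Ioc
  · filter_upwards [hsq] with N hN
    refine Eventually.of_forall fun v => ?_
    by_cases hv : v ∈ Set.Ioc 0 (π * (l N : ℝ))
    · rw [Set.indicator_of_mem hv]
      exact (norm_compensatedExp_mul_scaledCosSum_le hv _).trans (by gcongr)
    · rw [Set.indicator_of_notMem hv, norm_zero]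
      positivity
  · exact ((integrable_inv_one_add_sq.const_mul _).const_mul _).integrableOn
  · filter_upwards [ae_restrict_mem measurableSet_Ioi] with v hv
    have hlim := (continuous_compensatedExp.tendsto _).comp
      (hy.mul ((tendsto_scaledCosSum (ne_of_gt hv)).comp hl))
    refine hlim.congr' ?_
    filter_upwards [hrange.eventually_ge_atTop v] with N hN
    have hmem : v ∈ Set.Ioc 0 (π * (l N : ℝ)) := ⟨hv, hN⟩
    exact (Set.indicator_of_mem hmem fun v => compensatedExp (y N * scaledCosSum (l N) v)).symm

/-- `cosSum l` has mean zero, so `exp (i y) - 1` may be replaced by `compensatedExp y`. -/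
lemma blockCharFun_sub_one_eq_integral (l : ℕ) (s : ℝ) :
    blockCharFun l s - 1 = ∫ θ in (0 : ℝ)..1, compensatedExp (s * cosSum l θ) := by
  have hint {f : ℝ → ℂ} (hf : Continuous f) : IntervalIntegrable f volume 0 1 :=
    hf.intervalIntegrable 0 1
  have hmean : ∫ θ in (0 : ℝ)..1, ((s * cosSum l θ : ℝ) : ℂ) * Complex.I = 0 := by
    rw [intervalIntegral.integral_mul_const, intervalIntegral.integral_ofReal,
      intervalIntegral.integral_const_mul, integral_cosSum, mul_zero, Complex.ofReal_zero, zero_mul]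
  simp only [compensatedExp]
  rw [intervalIntegral.integral_sub (hint (by fun_prop)) (hint (by fun_prop)),
    intervalIntegral.integral_sub (hint (by fun_prop)) (hint (by fun_prop)), hmean,
    intervalIntegral.integral_const, blockCharFun]
  simp

lemma blockCharFun_sub_one {l : ℕ} (hl : l ≠ 0) (s : ℝ) :
    blockCharFun l s - 1 = ((1 / (π * l) : ℝ) : ℂ) * blockExponent l (s * l) := by
  have hl' : (l : ℝ) ≠ 0 := Nat.cast_ne_zero.2 hl
  have hrescale : blockExponent l (s * l) =
      ∫ v in (0 : ℝ)..(π * l), compensatedExp (s * cosSum l (v / (2 * π * l))) := by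
    rw [blockExponent, intervalIntegral.integral_of_le (by positivity)]
    simp only [scaledCosSum, mul_assoc, mul_div_cancel₀ _ hl']
  rw [blockCharFun_sub_one_eq_integral,
    integral_comp_cosSum l (f := fun x => compensatedExp (s * x)) (by fun_prop), hrescale,
    intervalIntegral.integral_comp_div (fun θ => compensatedExp (s * cosSum l θ)) (by positivity),
    zero_div, show π * l / (2 * π * l) = 1 / 2 by field_simp, ← Complex.real_smul, smul_smul]
  congr 1
  field_simp

lemma norm_blockCharFun_sub_one_le {l : ℕ} (hl : l ≠ 0) (s : ℝ) :
    ‖blockCharFun l s - 1‖ ≤ (1 + π ^ 2) * s ^ 2 * l := by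
  have hl' : (l : ℝ) ≠ 0 := Nat.cast_ne_zero.2 hl
  rw [blockCharFun_sub_one hl, norm_mul, Complex.norm_of_nonneg (by positivity)]
  calc 1 / (π * l) * ‖blockExponent l (s * l)‖
      ≤ 1 / (π * l) * (π * (1 + π ^ 2) * (s * l) ^ 2) := by
        gcongr
        exact norm_blockExponent_le _ _
    _ = (1 + π ^ 2) * s ^ 2 * l := by field_simp

lemma norm_blockCharFun_le (l : ℕ) (s : ℝ) : ‖blockCharFun l s‖ ≤ 1 := by
  have h := intervalIntegral.norm_integral_le_of_norm_le_const (a := (0 : ℝ)) (b := 1)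
    fun θ _ => (Complex.norm_exp_ofReal_mul_I (s * cosSum l θ)).le
  simpa [blockCharFun] using h

/-- At `l = ⌊u K⌋ + 1` the summand times `K` tends to the integrand of
`levyExponent_levyMeasure` at `u`. -/
lemma tendsto_sum_blockCharFun_sub_one (t : ℝ) {K : ℕ → ℕ} {s : ℕ → ℝ}
    (hK : Tendsto K atTop atTop) (hs : Tendsto (fun N => s N * K N) atTop (𝓝 1)) :
    Tendsto (fun N => ∑ i ∈ Finset.range (K N), (blockCharFun (i + 1) (t * s N) - 1)) atTop
      (𝓝 (levyExponent levyMeasure t)) := by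
  rw [levyExponent_levyMeasure]
  refine tendsto_sum_range_of_tendsto_floor (B := (1 + π ^ 2) * t ^ 2 * 4) (fun u hu => ?_) ?_
  · have hratio := tendsto_floor_mul_add_one_div hK hu.1.le
    have hpoint : Tendsto (fun N => t * s N * ((⌊K N * u⌋₊ + 1 : ℕ) : ℝ)) atTop (𝓝 (t * u)) := by
      refine (by simpa using (hs.mul hratio).const_mul t : Tendsto _ _ _).congr' ?_
      filter_upwards [hK.eventually_ne_atTop 0] with N hN
      have := Nat.cast_ne_zero (R := ℝ).2 hN
      push_cast
      field_simp
    have hcoef : Tendsto (fun N => ((1 / (π * (((⌊K N * u⌋₊ + 1 : ℕ) : ℝ) / K N)) : ℝ) : ℂ)) atTop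
        (𝓝 ((1 / (π * u) : ℝ) : ℂ)) :=
      (Complex.continuous_ofReal.tendsto _).comp
        (tendsto_const_nhds.div (hratio.const_mul π) (mul_pos pi_pos hu.1).ne')
    have hlim := hcoef.mul (tendsto_blockExponent (tendsto_floor_mul_add_one hK hu.1) hpoint)
    simp only [mul_assoc t u] at hlim
    refine hlim.congr' (Eventually.of_forall fun N => ?_)
    beta_reduce
    rw [blockCharFun_sub_one (Nat.add_one_ne_zero _), Complex.real_smul, ← mul_assoc,
      ← Complex.ofReal_mul]
    congr 2
    field_simp
  · filter_upwards [hs.abs.eventually_le_const (u := 2) (by norm_num)] with N hN i hi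
    have hiK : ((i + 1 : ℕ) : ℝ) ≤ K N := Nat.cast_le.2 hi
    rw [norm_smul, Real.norm_natCast]
    calc (K N : ℝ) * ‖blockCharFun (i + 1) (t * s N) - 1‖
        ≤ K N * ((1 + π ^ 2) * (t * s N) ^ 2 * K N) := by
          gcongr
          exact (norm_blockCharFun_sub_one_le (Nat.add_one_ne_zero i) _).trans (by gcongr)
      _ = (1 + π ^ 2) * t ^ 2 * |s N * K N| ^ 2 := by rw [sq_abs]; ring
      _ ≤ (1 + π ^ 2) * t ^ 2 * 2 ^ 2 := by gcongr
      _ = (1 + π ^ 2) * t ^ 2 * 4 := by norm_num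

lemma norm_prod_sub_prod_le {ι R : Type*} [NormedCommRing R] [NormOneClass R] {S : Finset ι}
    {z w : ι → R} (hz : ∀ i ∈ S, ‖z i‖ ≤ 1) (hw : ∀ i ∈ S, ‖w i‖ ≤ 1) :
    ‖∏ i ∈ S, z i - ∏ i ∈ S, w i‖ ≤ ∑ i ∈ S, ‖z i - w i‖ := by
  classical
  induction S using Finset.induction_on with
  | empty => simp
  | insert a S ha ih =>
    rw [Finset.forall_mem_insert] at hz hw
    have hprod : ‖∏ i ∈ S, z i‖ ≤ 1 := (Finset.norm_prod_le S z).trans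
      (Finset.prod_le_one (fun _ _ => norm_nonneg _) hz.2)
    rw [Finset.prod_insert ha, Finset.prod_insert ha, Finset.sum_insert ha]
    calc ‖z a * ∏ i ∈ S, z i - w a * ∏ i ∈ S, w i‖
        = ‖(z a - w a) * ∏ i ∈ S, z i + w a * (∏ i ∈ S, z i - ∏ i ∈ S, w i)‖ := by ring_nf
      _ ≤ ‖z a - w a‖ * ‖∏ i ∈ S, z i‖ + ‖w a‖ * ‖∏ i ∈ S, z i - ∏ i ∈ S, w i‖ :=
          norm_add_le_of_le (norm_mul_le _ _) (norm_mul_le _ _)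
      _ ≤ ‖z a - w a‖ * 1 + 1 * ∑ i ∈ S, ‖z i - w i‖ := by
          gcongr
          exacts [hw.1, ih hz.2 hw.2]
      _ = ‖z a - w a‖ + ∑ i ∈ S, ‖z i - w i‖ := by rw [mul_one, one_mul]

lemma norm_sub_exp_sub_one_le {z : ℂ} (hz : ‖z - 1‖ ≤ 1) :
    ‖z - Complex.exp (z - 1)‖ ≤ ‖z - 1‖ ^ 2 := by
  have h := Complex.norm_exp_sub_one_sub_id_le hz
  rwa [norm_sub_rev, sub_sub_sub_cancel_right] at h

lemma norm_exp_sub_one_le_one {z : ℂ} (hz : ‖z‖ ≤ 1) : ‖Complex.exp (z - 1)‖ ≤ 1 := by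
  rw [Complex.norm_exp, Real.exp_le_one_iff, Complex.sub_re, Complex.one_re]
  linarith [Complex.re_le_norm z]

/-- `∏ z` and `∏ exp (z - 1)` differ by at most `#S * a ^ 2`. -/
theorem tendsto_prod_of_tendsto_sum_sub_one {α ι : Type*} {f : Filter α} {S : α → Finset ι}
    {z : α → ι → ℂ} {a : α → ℝ} {w : ℂ} (hz : ∀ n, ∀ i ∈ S n, ‖z n i‖ ≤ 1)
    (hza : ∀ᶠ n in f, ∀ i ∈ S n, ‖z n i - 1‖ ≤ a n) (ha : Tendsto a f (𝓝 0))
    (hSa : Tendsto (fun n => (S n).card * a n ^ 2) f (𝓝 0))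
    (hsum : Tendsto (fun n => ∑ i ∈ S n, (z n i - 1)) f (𝓝 w)) :
    Tendsto (fun n => ∏ i ∈ S n, z n i) f (𝓝 (Complex.exp w)) := by
  have hdiff : Tendsto (fun n => ∏ i ∈ S n, z n i - Complex.exp (∑ i ∈ S n, (z n i - 1))) f
      (𝓝 0) := by
    refine squeeze_zero_norm' ?_ hSa
    filter_upwards [hza, ha.eventually_le_const zero_lt_one] with n hzn han
    rw [Complex.exp_sum, ← nsmul_eq_mul]
    refine (norm_prod_sub_prod_le (hz n) fun i hi => norm_exp_sub_one_le_one (hz n i hi)).trans ?_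
    refine Finset.sum_le_card_nsmul _ _ _ fun i hi => ?_
    refine (norm_sub_exp_sub_one_le ((hzn i hi).trans han)).trans ?_
    gcongr
    exact hzn i hi
  simpa using hdiff.add ((Complex.continuous_exp.tendsto _).comp hsum)

lemma tendsto_prod_blockCharFun (t : ℝ) {K : ℕ → ℕ} {s : ℕ → ℝ}
    (hK : Tendsto K atTop atTop) (hs : Tendsto (fun N => s N * K N) atTop (𝓝 1)) :
    Tendsto (fun N => ∏ i ∈ Finset.range (K N), blockCharFun (i + 1) (t * s N)) atTop
      (𝓝 (Complex.exp (levyExponent levyMeasure t))) := by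
  have hinv : Tendsto (fun N => (K N : ℝ)⁻¹) atTop (𝓝 0) :=
    tendsto_inv_atTop_zero.comp (tendsto_natCast_atTop_atTop.comp hK)
  have hcoef : Tendsto (fun N => (1 + π ^ 2) * t ^ 2 * (s N * K N) ^ 2) atTop
      (𝓝 ((1 + π ^ 2) * t ^ 2)) := by simpa using (hs.pow 2).const_mul ((1 + π ^ 2) * t ^ 2)
  refine tendsto_prod_of_tendsto_sum_sub_one
    (a := fun N => (1 + π ^ 2) * t ^ 2 * (s N * K N) ^ 2 * (K N : ℝ)⁻¹)
    (fun N i _ => norm_blockCharFun_le _ _) ?_ (by simpa using hcoef.mul hinv) ?_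
    (tendsto_sum_blockCharFun_sub_one t hK hs)
  · filter_upwards [hK.eventually_ne_atTop 0] with N hN i hi
    have hiK : ((i + 1 : ℕ) : ℝ) ≤ K N := Nat.cast_le.2 (Finset.mem_range.1 hi)
    have := Nat.cast_ne_zero (R := ℝ).2 hN
    calc ‖blockCharFun (i + 1) (t * s N) - 1‖ ≤ (1 + π ^ 2) * (t * s N) ^ 2 * K N :=
          (norm_blockCharFun_sub_one_le (Nat.add_one_ne_zero i) _).trans (by gcongr)
      _ = (1 + π ^ 2) * t ^ 2 * (s N * K N) ^ 2 * (K N : ℝ)⁻¹ := by field_simp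
  · refine (by simpa using (hcoef.pow 2).mul hinv : Tendsto _ _ _).congr' ?_
    filter_upwards [hK.eventually_ne_atTop 0] with N hN
    have := Nat.cast_ne_zero (R := ℝ).2 hN
    rw [Finset.card_range]
    field_simp

/-! ### Asymptotic independence of dilated periodic functions -/

section Dilation

variable {E : Type*} [NormedAddCommGroup E] [NormedSpace ℝ E] {f : ℝ → E}

lemma periodic_comp_natCast_mul {α : Type*} {f : ℝ → α} (hf : Function.Periodic f 1) (m : ℕ) :
    Function.Periodic (fun x => f (m * x)) 1 := fun x => by
  simpa only [mul_add, mul_one] using hf.nat_mul m (m * x)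

lemma integral_comp_add_of_periodic (hf : Function.Periodic f 1) (c : ℝ) :
    ∫ x in (0 : ℝ)..1, f (x + c) = ∫ x in (0 : ℝ)..1, f x := by
  rw [intervalIntegral.integral_comp_add_right, zero_add, add_comm 1 c]
  simpa only [zero_add] using hf.intervalIntegral_add_eq c 0

lemma integral_comp_natCast_mul_of_periodic (hf : Function.Periodic f 1)
    (hint : IntervalIntegrable f volume 0 1) {m : ℕ} (hm : m ≠ 0) :
    ∫ x in (0 : ℝ)..1, f (m * x) = ∫ x in (0 : ℝ)..1, f x := by
  have hm' : (m : ℝ) ≠ 0 := Nat.cast_ne_zero.2 hm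
  have h := hf.intervalIntegral_add_zsmul_eq m 0 (hf.intervalIntegrable₀ one_ne_zero hint)
  rw [zero_add, zero_add, zsmul_eq_mul, mul_one, Int.cast_natCast, natCast_zsmul] at h
  rw [intervalIntegral.integral_comp_mul_left f hm', mul_zero, mul_one, h,
    ← Nat.cast_smul_eq_nsmul ℝ, inv_smul_smul₀ hm']

end Dilation

section Decorrelation

variable {𝕜 : Type*} [RCLike 𝕜] {h g : ℝ → 𝕜}

lemma integral_integral_mul_comp_mul_add (hh : Continuous h) (hg : Continuous g)
    (hgp : Function.Periodic g 1) (m : ℝ) :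
    ∫ y in (0 : ℝ)..1, ∫ x in (0 : ℝ)..1, h x * g (m * x + y) =
      (∫ x in (0 : ℝ)..1, h x) * ∫ x in (0 : ℝ)..1, g x := by
  have hint : IntegrableOn (Function.uncurry fun y x => h x * g (m * x + y))
      (Set.uIoc 0 1 ×ˢ Set.uIoc 0 1) := by
    have hcont : Continuous (Function.uncurry fun y x => h x * g (m * x + y)) := by
      unfold Function.uncurry; fun_prop
    exact (hcont.continuousOn.integrableOn_compact (isCompact_uIcc.prod isCompact_uIcc)).mono_set
      (Set.prod_mono Set.uIoc_subset_uIcc Set.uIoc_subset_uIcc)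
  rw [intervalIntegral_intervalIntegral_swap hint]
  simp_rw [intervalIntegral.integral_const_mul, add_comm (m * _),
    integral_comp_add_of_periodic hgp, intervalIntegral.integral_mul_const]

/-- A shift by `y / m` does not change the integral of `h x * g (m * x)`, moves `h` by at most
`C / m`, and averages to the product of the means over `y ∈ [0, 1]`. -/
lemma norm_integral_mul_comp_natCast_mul_sub_le {C : NNReal} (hh : LipschitzWith C h)
    (hhp : Function.Periodic h 1) (hg : Continuous g) (hgp : Function.Periodic g 1)
    (hg1 : ∀ x, ‖g x‖ ≤ 1) {m : ℕ} (hm : m ≠ 0) :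
    ‖(∫ x in (0 : ℝ)..1, h x * g (m * x)) -
      (∫ x in (0 : ℝ)..1, h x) * ∫ x in (0 : ℝ)..1, g x‖ ≤ C / m := by
  have hm' : (m : ℝ) ≠ 0 := Nat.cast_ne_zero.2 hm
  have hhc := hh.continuous
  have hshift (y : ℝ) : ∫ x in (0 : ℝ)..1, h (x + y / m) * g (m * x + y) =
      ∫ x in (0 : ℝ)..1, h x * g (m * x) := by
    simpa only [Pi.mul_apply, mul_add, mul_div_cancel₀ y hm'] using
      integral_comp_add_of_periodic (hhp.mul (periodic_comp_natCast_mul hgp m)) (y / m)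
  have hclose : ∀ y ∈ Set.uIoc (0 : ℝ) 1, ‖(∫ x in (0 : ℝ)..1, h x * g (m * x)) -
      ∫ x in (0 : ℝ)..1, h x * g (m * x + y)‖ ≤ C / m := fun y hy => by
    rw [Set.uIoc_of_le zero_le_one] at hy
    rw [← hshift y, ← intervalIntegral.integral_sub
      (Continuous.intervalIntegrable (by fun_prop) _ _)
      (Continuous.intervalIntegrable (by fun_prop) _ _)]
    refine (intervalIntegral.norm_integral_le_of_norm_le_const (C := C / m) fun x _ => ?_).trans_eq
      (by simp)
    rw [← sub_mul, norm_mul]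
    calc ‖h (x + y / m) - h x‖ * ‖g (m * x + y)‖ ≤ C * ‖x + y / m - x‖ * 1 := by
          gcongr
          exacts [hh.norm_sub_le _ _, hg1 _]
      _ = C * (y / m) := by
          rw [add_sub_cancel_left, mul_one, Real.norm_of_nonneg (by have := hy.1; positivity)]
      _ ≤ C * (1 / m) := by gcongr; exact hy.2
      _ = C / m := mul_one_div _ _
  have hmean : (∫ x in (0 : ℝ)..1, h x * g (m * x)) - (∫ x in (0 : ℝ)..1, h x) *
      ∫ x in (0 : ℝ)..1, g x = ∫ y in (0 : ℝ)..1, ((∫ x in (0 : ℝ)..1, h x * g (m * x)) -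
        ∫ x in (0 : ℝ)..1, h x * g (m * x + y)) := by
    rw [← integral_integral_mul_comp_mul_add hhc hg hgp, intervalIntegral.integral_sub (by simp),
      intervalIntegral.integral_const, sub_zero, one_smul]
    refine (intervalIntegral.continuous_parametric_intervalIntegral_of_continuous' ?_ _
      _).intervalIntegrable _ _
    unfold Function.uncurry; fun_prop
  rw [hmean]
  simpa using intervalIntegral.norm_integral_le_of_norm_le_const hclose

end Decorrelation

lemma lipschitzWith_exp_ofReal_mul_I :
    LipschitzWith 1 fun x : ℝ => Complex.exp (x * Complex.I) := by
  refine LipschitzWith.of_dist_le_mul fun x y => ?_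
  have hfactor : Complex.exp (x * Complex.I) - Complex.exp (y * Complex.I) =
      Complex.exp (y * Complex.I) * (Complex.exp (Complex.I * (x - y : ℝ)) - 1) := by
    rw [mul_sub_one, ← Complex.exp_add]
    congr 2
    push_cast
    ring
  rw [dist_eq_norm, dist_eq_norm, hfactor, norm_mul, Complex.norm_exp_ofReal_mul_I, NNReal.coe_one]
  gcongr
  exact Real.norm_exp_I_mul_ofReal_sub_one_le

lemma lipschitzWith_sum_comp_natCast_mul {f : ℕ → ℝ → ℝ} {L : ℕ → NNReal}
    (hL : ∀ i, LipschitzWith (L i) (f i)) (μ : ℕ → ℕ) (K : ℕ) :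
    LipschitzWith (∑ i ∈ Finset.range K, L i * μ i)
      fun x => ∑ i ∈ Finset.range K, f i (μ i * x) := by
  induction K with
  | zero => simp
  | succ K ih =>
    simp only [Finset.sum_range_succ]
    refine ih.add ((hL K).comp (LipschitzWith.of_dist_le_mul fun x y => ?_))
    rw [Real.dist_eq, Real.dist_eq, ← mul_sub, abs_mul, Nat.abs_cast, NNReal.coe_natCast]

theorem norm_integral_exp_sum_sub_prod_le {f : ℕ → ℝ → ℝ} {L : ℕ → NNReal}
    (hL : ∀ i, LipschitzWith (L i) (f i)) (hf : ∀ i, Function.Periodic (f i) 1) {μ : ℕ → ℕ}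
    (hμ : ∀ i, μ i ≠ 0) (K : ℕ) :
    ‖(∫ x in (0 : ℝ)..1,
          Complex.exp ((∑ i ∈ Finset.range K, f i (μ i * x) : ℝ) * Complex.I)) -
        ∏ i ∈ Finset.range K, ∫ x in (0 : ℝ)..1, Complex.exp (f i x * Complex.I)‖ ≤
      ∑ i ∈ Finset.range K, (∑ j ∈ Finset.range i, L j * μ j : ℝ) / μ i := by
  induction K with
  | zero => simp
  | succ K ih =>
    set h : ℝ → ℂ := fun x => Complex.exp ((∑ i ∈ Finset.range K, f i (μ i * x) : ℝ) * Complex.I)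
    set g : ℝ → ℂ := fun x => Complex.exp (f K x * Complex.I)
    set P : ℂ := ∏ i ∈ Finset.range K, ∫ x in (0 : ℝ)..1, Complex.exp (f i x * Complex.I)
    have hsplit : ∫ x in (0 : ℝ)..1,
        Complex.exp ((∑ i ∈ Finset.range (K + 1), f i (μ i * x) : ℝ) * Complex.I) =
          ∫ x in (0 : ℝ)..1, h x * g (μ K * x) := by
      simp only [h, g, ← Complex.exp_add, ← add_mul, Finset.sum_range_succ, Complex.ofReal_add]
    have hLip : LipschitzWith (∑ i ∈ Finset.range K, L i * μ i) h := by
      have hcomp := lipschitzWith_exp_ofReal_mul_I.comp (lipschitzWith_sum_comp_natCast_mul hL μ K)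
      rwa [one_mul] at hcomp
    have hstep := norm_integral_mul_comp_natCast_mul_sub_le hLip
      (fun x => by simp only [h, periodic_comp_natCast_mul (hf _) _ x])
      (lipschitzWith_exp_ofReal_mul_I.continuous.comp (hL K).continuous)
      (fun x => by simp only [Function.comp_apply, hf K x])
      (fun x => (Complex.norm_exp_ofReal_mul_I _).le) (hμ K)
    have hg1 : ‖∫ x in (0 : ℝ)..1, g x‖ ≤ 1 := by
      simpa using intervalIntegral.norm_integral_le_of_norm_le_const (a := (0 : ℝ)) (b := 1)
        fun x _ => (Complex.norm_exp_ofReal_mul_I (f K x)).le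
    push_cast at hstep
    rw [hsplit, Finset.prod_range_succ, Finset.sum_range_succ, add_comm (∑ i ∈ _, _)]
    calc ‖(∫ x in (0 : ℝ)..1, h x * g (μ K * x)) - P * ∫ x in (0 : ℝ)..1, g x‖
        = ‖((∫ x in (0 : ℝ)..1, h x * g (μ K * x)) -
              (∫ x in (0 : ℝ)..1, h x) * ∫ x in (0 : ℝ)..1, g x) +
            ((∫ x in (0 : ℝ)..1, h x) - P) * ∫ x in (0 : ℝ)..1, g x‖ := by ring_nf
      _ ≤ _ := norm_add_le_of_le hstep ((norm_mul_le_of_le ih hg1).trans_eq (mul_one _))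

lemma sum_range_sum_range_div_le_two {μ : ℕ → ℕ} (hμ : ∀ i, 4 * 8 ^ i * μ i ≤ μ (i + 1)) (K : ℕ) :
    ∑ i ∈ Finset.range K, (∑ j ∈ Finset.range i, ((j + 1 : ℕ) : ℝ) ^ 2 * μ j) / μ i ≤ 2 := by
  have hnat (i : ℕ) : 2 ^ i * ∑ j ∈ Finset.range i, (j + 1) ^ 2 * μ j ≤ μ i := by
    induction i with
    | zero => simp
    | succ i ih =>
      rw [Finset.sum_range_succ]
      have hsq : (i + 1) ^ 2 ≤ 4 ^ i := by
        rw [show 4 = 2 ^ 2 by rfl, pow_right_comm]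
        exact Nat.pow_le_pow_left Nat.lt_two_pow_self 2
      calc 2 ^ (i + 1) * (∑ j ∈ Finset.range i, (j + 1) ^ 2 * μ j + (i + 1) ^ 2 * μ i)
          = 2 * (2 ^ i * ∑ j ∈ Finset.range i, (j + 1) ^ 2 * μ j) +
              2 * (2 ^ i * (i + 1) ^ 2) * μ i := by ring
        _ ≤ 2 * μ i + 2 * (2 ^ i * 4 ^ i) * μ i := by gcongr
        _ = (2 + 2 * 8 ^ i) * μ i := by rw [← mul_pow]; ring
        _ ≤ 4 * 8 ^ i * μ i := by
            have hpow : 1 ≤ 8 ^ i := Nat.one_le_pow i 8 (by norm_num)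
            gcongr
            linarith
        _ ≤ μ (i + 1) := hμ i
  refine le_trans (Finset.sum_le_sum fun i _ => ?_) (sum_geometric_two_le K)
  refine div_le_of_le_mul₀ (Nat.cast_nonneg _) (by positivity) ?_
  have hreal : (2 : ℝ) ^ i * ∑ j ∈ Finset.range i, ((j + 1 : ℕ) : ℝ) ^ 2 * μ j ≤ μ i := by
    exact_mod_cast hnat i
  rw [one_div_pow, one_div_mul_eq_div, le_div_iff₀' (pow_pos two_pos i)]
  exact hreal

lemma norm_integral_exp_sum_cosSum_sub_prod_le {μ : ℕ → ℕ} (hμ0 : ∀ i, μ i ≠ 0)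
    (hμ : ∀ i, 4 * 8 ^ i * μ i ≤ μ (i + 1)) (s : ℝ) (K : ℕ) :
    ‖(∫ x in (0 : ℝ)..1,
          Complex.exp ((s * ∑ i ∈ Finset.range K, cosSum (i + 1) (μ i * x) : ℝ) * Complex.I)) -
        ∏ i ∈ Finset.range K, blockCharFun (i + 1) s‖ ≤ 4 * π * |s| := by
  have hLip (i : ℕ) : LipschitzWith (‖s‖₊ * (2 * NNReal.pi * (i + 1 : ℕ) ^ 2))
      fun θ => s * cosSum (i + 1) θ :=
    (lipschitzWith_smul s).comp (lipschitzWith_cosSum (i + 1))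
  have hfactor := norm_integral_exp_sum_sub_prod_le hLip
    (fun i => (cosSum_periodic (i + 1)).comp (s * ·)) hμ0 K
  simp only [← Finset.mul_sum] at hfactor
  refine hfactor.trans ?_
  have hconst (i : ℕ) : (∑ j ∈ Finset.range i,
      ((‖s‖₊ * (2 * NNReal.pi * (j + 1 : ℕ) ^ 2) : NNReal) : ℝ) * μ j) / μ i =
        2 * π * |s| * ((∑ j ∈ Finset.range i, ((j + 1 : ℕ) : ℝ) ^ 2 * μ j) / μ i) := by
    rw [← mul_div_assoc, Finset.mul_sum]
    congr 1
    refine Finset.sum_congr rfl fun j _ => ?_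
    push_cast [NNReal.coe_real_pi]
    rw [Real.norm_eq_abs]
    ring
  simp only [hconst, ← Finset.mul_sum]
  calc 2 * π * |s| * ∑ i ∈ Finset.range K, _ ≤ 2 * π * |s| * 2 := by
        gcongr
        exact sum_range_sum_range_div_le_two hμ K
    _ = 4 * π * |s| := by ring

/-! ### Rearrangements of the indices -/

/-- The sequence which lists `a` in order at the positions satisfying `p`, and `b` in order at the
other positions. -/
def merge {α : Type*} (p : ℕ → Prop) [DecidablePred p] (a b : ℕ → α) (k : ℕ) : α :=
  if p k then a (Nat.count p k) else b (Nat.count (fun j => ¬p j) k)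

section Merge

variable {α : Type*} {p : ℕ → Prop} [DecidablePred p] {a b : ℕ → α}

lemma merge_injective (ha : Function.Injective a) (hb : Function.Injective b)
    (hab : Disjoint (Set.range a) (Set.range b)) : Function.Injective (merge p a b) := by
  have hne (i j : ℕ) : a i ≠ b j := Set.disjoint_range_iff.1 hab i j
  intro k l hkl
  unfold merge at hkl
  split_ifs at hkl with hk hl hl
  · exact Nat.count_injective hk hl (ha hkl)
  · exact absurd hkl (hne _ _)
  · exact absurd hkl.symm (hne _ _)
  · exact Nat.count_injective (p := fun j => ¬p j) hk hl (hb hkl)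

lemma range_merge (hp : {k | p k}.Infinite) (hp' : {k | ¬p k}.Infinite) :
    Set.range (merge p a b) = Set.range a ∪ Set.range b := by
  refine (Set.range_subset_iff.2 fun k => ?_).antisymm
    (Set.union_subset (Set.range_subset_iff.2 fun q => ?_) (Set.range_subset_iff.2 fun q => ?_))
  · unfold merge
    split_ifs
    exacts [Or.inl (Set.mem_range_self _), Or.inr (Set.mem_range_self _)]
  · exact ⟨Nat.nth p q, by
      rw [merge, if_pos (Nat.nth_mem_of_infinite hp q), Nat.count_nth_of_infinite hp]⟩
  · exact ⟨Nat.nth (fun j => ¬p j) q, by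
      rw [merge, if_neg (Nat.nth_mem_of_infinite hp' q), Nat.count_nth_of_infinite hp']⟩

lemma sum_range_merge {M : Type*} [AddCommMonoid M] (f : α → M) (N : ℕ) :
    ∑ k ∈ Finset.range N, f (merge p a b k) =
      ∑ q ∈ Finset.range (Nat.count p N), f (a q) +
        ∑ q ∈ Finset.range (Nat.count (fun j => ¬p j) N), f (b q) := by
  induction N with
  | zero => simp
  | succ N ih =>
    rw [Finset.sum_range_succ, ih, Nat.count_succ, Nat.count_succ, merge]
    by_cases hN : p N
    · simp only [hN, if_true, not_true, if_false, add_zero, Finset.sum_range_succ]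
      abel
    · simp only [hN, if_false, not_false_eq_true, if_true, add_zero, Finset.sum_range_succ]
      abel

end Merge

lemma count_add_count_not (p : ℕ → Prop) [DecidablePred p] (N : ℕ) :
    Nat.count p N + Nat.count (fun k => ¬p k) N = N := by
  simpa using (sum_range_merge (p := p) (a := id) (b := id) (fun _ => (1 : ℕ)) N).symm

lemma sum_range_count_nth {M : Type*} [AddCommMonoid M] (p : ℕ → Prop) [DecidablePred p]
    (f : ℕ → M) (N : ℕ) :
    ∑ q ∈ Finset.range (Nat.count p N), f (Nat.nth p q) =
      ∑ k ∈ Finset.range N, if p k then f k else 0 := by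
  induction N with
  | zero => simp
  | succ N ih =>
    rw [Finset.sum_range_succ, ← ih, Nat.count_succ]
    split_ifs with hN
    · rw [Finset.sum_range_succ, Nat.nth_count hN]
    · rw [add_zero, add_zero]

/-! ### Blocks of consecutive indices -/

/-- `InBlocks s ℓ k` says that `k` lies in one of the blocks `[s b, s b + ℓ b)`. -/
def InBlocks (s ℓ : ℕ → ℕ) (k : ℕ) : Prop := ∃ b, s b ≤ k ∧ k < s b + ℓ b

section InBlocks

variable {s ℓ : ℕ → ℕ}

lemma block_unique (hs : ∀ b, s b + ℓ b ≤ s (b + 1)) {k b c : ℕ} (hb : s b ≤ k)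
    (hb' : k < s b + ℓ b) (hc : s c ≤ k) (hc' : k < s c + ℓ c) : b = c := by
  have hmono : Monotone s := monotone_nat_of_le_succ fun b => Nat.le_of_add_right_le (hs b)
  by_contra hne
  exact Set.disjoint_left.1 (hmono.pairwise_disjoint_on_Ico_succ hne)
    ⟨hb, hb'.trans_le (hs b)⟩ ⟨hc, hc'.trans_le (hs c)⟩

lemma infinite_inBlocks (hs : StrictMono s) (hℓ : ∀ b, 0 < ℓ b) : {k | InBlocks s ℓ k}.Infinite :=
  (Set.infinite_range_of_injective hs.injective).mono <| Set.range_subset_iff.2 fun b =>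
    ⟨b, le_rfl, Nat.lt_add_of_pos_right (hℓ b)⟩

open scoped Classical in
lemma sum_range_ite_inBlocks {M : Type*} [AddCommMonoid M] (hs : ∀ b, s b + ℓ b ≤ s (b + 1))
    (f : ℕ → M) (B : ℕ) {m : ℕ} (hm : m ≤ ℓ B) :
    ∑ k ∈ Finset.range (s B + m), (if InBlocks s ℓ k then f k else 0) =
      ∑ b ∈ Finset.range B, ∑ j ∈ Finset.range (ℓ b), f (s b + j) +
        ∑ j ∈ Finset.range m, f (s B + j) := by
  have hmono : Monotone s := monotone_nat_of_le_succ fun b => Nat.le_of_add_right_le (hs b)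
  have hend : Monotone fun b => s b + ℓ b :=
    monotone_nat_of_le_succ fun b => (hs b).trans (Nat.le_add_right _ _)
  induction B generalizing m with
  | zero =>
    rw [Finset.sum_range_add, Finset.sum_range_zero]
    congr 1
    · refine Finset.sum_eq_zero fun k hk => if_neg ?_
      rintro ⟨b, hb, -⟩
      exact (Finset.mem_range.1 hk).not_ge ((hmono b.zero_le).trans hb)
    · exact Finset.sum_congr rfl fun j hj =>
        if_pos ⟨0, by lia, by have := Finset.mem_range.1 hj; lia⟩
  | succ B ih =>
    obtain ⟨d, hd⟩ := Nat.exists_eq_add_of_le (hs B)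
    rw [Finset.sum_range_add, Finset.sum_range_succ, ← ih le_rfl]
    congr 1
    · rw [hd, Finset.sum_range_add _ (s B + ℓ B)]
      refine (congrArg _ (Finset.sum_eq_zero fun j hj => if_neg ?_)).trans (add_zero _)
      rintro ⟨b, hb, hb'⟩
      have := Finset.mem_range.1 hj
      rcases Nat.lt_or_ge B b with hBb | hbB
      · have := hmono (Nat.succ_le_of_lt hBb)
        lia
      · have := hend hbB
        lia
    · exact Finset.sum_congr rfl fun j hj =>
        if_pos ⟨B + 1, by lia, by have := Finset.mem_range.1 hj; lia⟩

lemma exists_sum_range_nth_inBlocks_eq {M : Type*} [AddCommMonoid M]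
    (hs : ∀ b, s b + ℓ b ≤ s (b + 1)) (hℓ : ∀ b, 0 < ℓ b) (q : ℕ) :
    ∃ B, ∃ m < ℓ B, q = ∑ b ∈ Finset.range B, ℓ b + m ∧ ∀ f : ℕ → M,
      ∑ i ∈ Finset.range q, f (Nat.nth (InBlocks s ℓ) i) =
        ∑ b ∈ Finset.range B, ∑ j ∈ Finset.range (ℓ b), f (s b + j) +
          ∑ j ∈ Finset.range m, f (s B + j) := by
  classical
  have hinf : {k | InBlocks s ℓ k}.Infinite :=
    infinite_inBlocks (strictMono_nat_of_lt_succ fun b => by have := hs b; have := hℓ b; lia) hℓ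
  obtain ⟨B, hB, hB'⟩ := Nat.nth_mem_of_infinite hinf q
  obtain ⟨m, hm⟩ := Nat.exists_eq_add_of_le hB
  have hmℓ : m < ℓ B := by lia
  have hcount : Nat.count (InBlocks s ℓ) (s B + m) = q := by
    rw [← hm, Nat.count_nth_of_infinite hinf]
  refine ⟨B, m, hmℓ, ?_, fun f => ?_⟩
  · have hone := sum_range_count_nth (InBlocks s ℓ) (fun _ => 1) (s B + m)
    rw [sum_range_ite_inBlocks hs _ B hmℓ.le, hcount] at hone
    simpa using hone
  · rw [← sum_range_ite_inBlocks hs f B hmℓ.le, ← sum_range_count_nth, hcount]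

end InBlocks

/-! ### Frequencies with prescribed gaps -/

/-- The base frequency of a block which starts at the index `k`; the growth of the product makes
blocks with different bases almost independent. -/
def blockBase (A k : ℕ) : ℕ := ∏ j ∈ Finset.range k, A * 8 ^ j

/-- The frequencies which form the progression `blockBase A d, 2 * blockBase A d, …` on each block
`[d, d')` between consecutive elements of `D`. -/
def blockFreq (A : ℕ) (D : ℕ → Prop) [DecidablePred D] (k : ℕ) : ℕ :=
  (k - Nat.findGreatest D k + 1) * blockBase A (Nat.findGreatest D k)

lemma blockBase_succ (A k : ℕ) : blockBase A (k + 1) = blockBase A k * (A * 8 ^ k) :=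
  Finset.prod_range_succ _ _

section BlockFreq

variable {A : ℕ} {D : ℕ → Prop} [DecidablePred D]

lemma blockBase_pos (hA : 0 < A) (k : ℕ) : 0 < blockBase A k :=
  Finset.prod_pos fun _ _ => by positivity

lemma blockBase_mono (hA : 0 < A) : Monotone (blockBase A) :=
  monotone_nat_of_le_succ fun k => by
    rw [blockBase_succ]
    exact Nat.le_mul_of_pos_right _ (by positivity)

lemma blockFreq_pos (hA : 0 < A) (k : ℕ) : 0 < blockFreq A D k :=
  Nat.mul_pos (Nat.succ_pos _) (blockBase_pos hA _)

lemma blockFreq_le (hA : 0 < A) (k : ℕ) : blockFreq A D k ≤ 8 ^ k * blockBase A k :=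
  Nat.mul_le_mul
    (calc k - Nat.findGreatest D k + 1 ≤ k + 1 := by lia
      _ ≤ 8 ^ k := Nat.lt_pow_self (by norm_num))
    (blockBase_mono hA (Nat.findGreatest_le k))

lemma findGreatest_add_eq {d : ℕ} (hd : D d) {j : ℕ} (hD : ∀ k, d < k → k ≤ d + j → ¬D k) :
    Nat.findGreatest D (d + j) = d :=
  Nat.findGreatest_eq_iff.2 ⟨Nat.le_add_right _ _, fun _ => hd, fun _ hk hk' => hD _ hk hk'⟩

lemma blockFreq_add {d : ℕ} (hd : D d) {j : ℕ} (hD : ∀ k, d < k → k ≤ d + j → ¬D k) :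
    blockFreq A D (d + j) = (j + 1) * blockBase A d := by
  rw [blockFreq, findGreatest_add_eq hd hD, Nat.add_sub_cancel_left]

lemma mul_blockFreq_le_blockFreq_succ {ε : ℕ → ℝ} {k : ℕ} (hA : 1 + ε k ≤ A) (hA0 : 0 < A)
    (hD : ¬D (k + 1) → ε k * (k - Nat.findGreatest D k + 1 : ℕ) ≤ 1) :
    (1 + ε k) * blockFreq A D k ≤ blockFreq A D (k + 1) := by
  by_cases hk : D (k + 1)
  · have hstart : blockFreq A D (k + 1) = A * (8 ^ k * blockBase A k) := by
      rw [blockFreq, Nat.findGreatest_eq hk, Nat.sub_self, blockBase_succ]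
      ring
    rw [hstart, Nat.cast_mul]
    exact mul_le_mul hA (Nat.cast_le.2 (blockFreq_le hA0 k)) (Nat.cast_nonneg _)
      (Nat.cast_nonneg _)
  · have hsub : k + 1 - Nat.findGreatest D k = k - Nat.findGreatest D k + 1 :=
      Nat.sub_add_comm (Nat.findGreatest_le k)
    rw [blockFreq, blockFreq, Nat.findGreatest_of_not hk, hsub, Nat.cast_mul, Nat.cast_mul,
      ← mul_assoc]
    gcongr
    push_cast at hD ⊢
    linarith [hD hk]

end BlockFreq

/-! ### Rounds -/

/-- The rounds `[r i, r i + (i + 1 + 2 ^ i))` follow each other with gaps. -/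
def SeparatedRounds (r : ℕ → ℕ) : Prop := ∀ i, r i + (i + 1 + 2 ^ i) < r (i + 1)

lemma exists_separatedRounds {ε : ℕ → ℝ} (hε : Tendsto ε atTop (𝓝 0)) :
    ∃ r : ℕ → ℕ, SeparatedRounds r ∧ ∀ i k, r i ≤ k → ε k * (i + 1 + 2 ^ i : ℕ) ≤ 1 := by
  have hsmall (l : ℕ) : ∀ᶠ k in atTop, ∀ k' ≥ k, ε k' * l ≤ 1 := by
    have hlim : Tendsto (fun k => ε k * l) atTop (𝓝 0) := by simpa using hε.mul_const (l : ℝ)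
    exact eventually_forall_ge_atTop.2 (hlim.eventually_le_const one_pos)
  obtain ⟨φ, hφ, hφε⟩ := extraction_forall_of_eventually hsmall
  have hgrowth (l d : ℕ) : φ l + d ≤ φ (l + d) := by
    induction d with
    | zero => simp
    | succ d ih => exact Nat.succ_le_of_lt (ih.trans_lt (hφ (Nat.lt_succ_self _)))
  have hlen (i : ℕ) : i + 1 + 2 ^ i < 2 ^ (i + 2) := by
    have := Nat.lt_two_pow_self (n := i)
    lia
  refine ⟨fun i => φ (2 ^ (i + 2)), fun i => ?_, fun i k hk => ?_⟩
  · calc φ (2 ^ (i + 2)) + (i + 1 + 2 ^ i) < φ (2 ^ (i + 2)) + 2 ^ (i + 2) := by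
          gcongr
          exact hlen i
      _ ≤ φ (2 ^ (i + 2) + 2 ^ (i + 2)) := hgrowth _ _
      _ = φ (2 ^ (i + 1 + 2)) := by ring_nf
  · exact hφε _ k ((hφ.monotone (hlen i).le).trans hk)

/-- The indices `k` outside the interiors of the rounds. -/
def IsRoundStart (r : ℕ → ℕ) (k : ℕ) : Prop :=
  ¬InBlocks (fun i => r i + 1) (fun i => i + 2 ^ i) k

/-- The indices in the main part, of length `i + 1`, of some round `i`. -/
def IsMain (r : ℕ → ℕ) : ℕ → Prop := InBlocks r (· + 1)

/-- The indices in the long tail, of length `2 ^ i`, of some round `i`. -/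
def IsTail (r : ℕ → ℕ) : ℕ → Prop := InBlocks (fun i => r i + (i + 1)) (2 ^ ·)

/-- The indices between the rounds. -/
def IsFiller (r : ℕ → ℕ) (k : ℕ) : Prop := ¬IsMain r k ∧ ¬IsTail r k

/-- The rearrangement which alternates between the main parts and the tails of the rounds, except
for the sparse positions `2 ^ j`, where it has the remaining indices. -/
def roundOrder (r : ℕ → ℕ) : ℕ → ℕ :=
  merge Nat.isPowerOfTwo (Nat.nth (IsFiller r))
    (merge Even (Nat.nth (IsMain r)) (Nat.nth (IsTail r)))

lemma infinite_isPowerOfTwo : {k : ℕ | k.isPowerOfTwo}.Infinite :=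
  (Set.infinite_range_of_injective (Nat.pow_right_injective le_rfl)).mono <|
    Set.range_subset_iff.2 fun j => ⟨j, rfl⟩

lemma infinite_not_isPowerOfTwo : {k : ℕ | ¬k.isPowerOfTwo}.Infinite := by
  refine ((Nat.frequently_atTop_iff_infinite.1 Nat.frequently_odd).sdiff
    (Set.finite_singleton 1)).mono ?_
  rintro _ ⟨hodd, hne⟩ ⟨j, rfl⟩
  rcases eq_or_ne j 0 with rfl | hj
  · exact hne rfl
  · exact Nat.not_odd_iff_even.2 (even_two.pow_of_ne_zero hj) hodd

section Rounds

variable {r : ℕ → ℕ}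

lemma SeparatedRounds.strictMono (hr : SeparatedRounds r) : StrictMono r :=
  strictMono_nat_of_lt_succ fun i => (Nat.le_add_right _ _).trans_lt (hr i)

lemma SeparatedRounds.round_unique (hr : SeparatedRounds r) {i j k : ℕ} (hi : r i ≤ k)
    (hi' : k < r i + (i + 1 + 2 ^ i)) (hj : r j ≤ k) (hj' : k < r j + (j + 1 + 2 ^ j)) : i = j :=
  block_unique (ℓ := fun i => i + 1 + 2 ^ i) (fun i => (hr i).le) hi hi' hj hj'

lemma isRoundStart_roundStart (hr : SeparatedRounds r) (i : ℕ) :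
    IsRoundStart r (r i) := by
  rintro ⟨j, hj, hj'⟩
  obtain rfl : i = j := hr.round_unique le_rfl (by lia) (by lia) (by lia)
  lia

lemma not_isRoundStart {i k : ℕ} (hk : r i < k) (hk' : k < r i + (i + 1 + 2 ^ i)) :
    ¬IsRoundStart r k :=
  not_not.2 ⟨i, hk, by lia⟩

/-- The frequencies of the theorem, for given starts of the rounds. -/
def roundFreq (A : ℕ) (r : ℕ → ℕ) : ℕ → ℕ :=
  open scoped Classical in blockFreq A (IsRoundStart r)

lemma roundFreq_pos {A : ℕ} (hA : 0 < A) (k : ℕ) : 0 < roundFreq A r k := by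
  classical exact blockFreq_pos hA k

lemma roundFreq_add (hr : SeparatedRounds r) (A : ℕ) {i j : ℕ} (hj : j < i + 1 + 2 ^ i) :
    roundFreq A r (r i + j) = (j + 1) * blockBase A (r i) := by
  classical
  exact blockFreq_add (isRoundStart_roundStart hr i) fun _ hk hk' => not_isRoundStart hk (by lia)

lemma mul_roundFreq_le_roundFreq_succ {ε : ℕ → ℝ} {A : ℕ} (hr : SeparatedRounds r)
    (hrε : ∀ i k, r i ≤ k → ε k * (i + 1 + 2 ^ i : ℕ) ≤ 1) {k : ℕ} (hε : 0 < ε k)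
    (hA : 1 + ε k ≤ A) :
    (1 + ε k) * roundFreq A r k ≤ roundFreq A r (k + 1) := by
  classical
  refine mul_blockFreq_le_blockFreq_succ hA (Nat.cast_pos.1 (by linarith : (0 : ℝ) < A)) ?_
  rintro hk
  obtain ⟨i, hi, hi'⟩ := not_not.1 hk
  obtain ⟨j, rfl⟩ := Nat.exists_eq_add_of_le (Nat.le_of_succ_le_succ hi)
  rw [findGreatest_add_eq (isRoundStart_roundStart hr i) fun _ hl hl' =>
    not_isRoundStart hl (by lia)]
  refine le_trans ?_ (hrε i (r i + j) (Nat.le_add_right _ _))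
  exact mul_le_mul_of_nonneg_left (Nat.cast_le.2 (by lia)) hε.le

lemma four_mul_eight_pow_mul_blockBase_le {A : ℕ} (hA : 4 ≤ A)
    (hr : SeparatedRounds r) (i : ℕ) :
    4 * 8 ^ i * blockBase A (r i) ≤ blockBase A (r (i + 1)) := by
  have hmono := hr.strictMono
  calc 4 * 8 ^ i * blockBase A (r i) ≤ A * 8 ^ r i * blockBase A (r i) := by
        gcongr
        exacts [by norm_num, hmono.le_apply]
    _ = blockBase A (r i + 1) := by rw [blockBase_succ, mul_comm]
    _ ≤ blockBase A (r (i + 1)) :=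
        blockBase_mono (by lia) (Nat.succ_le_of_lt (hmono (Nat.lt_succ_self i)))

lemma infinite_isMain (hr : SeparatedRounds r) : {k | IsMain r k}.Infinite :=
  infinite_inBlocks (hr.strictMono) fun _ => Nat.succ_pos _

lemma infinite_isTail (hr : SeparatedRounds r) : {k | IsTail r k}.Infinite :=
  infinite_inBlocks ((hr.strictMono).add (strictMono_id.add_const 1))
    fun _ => Nat.two_pow_pos _

lemma infinite_isFiller (hr : SeparatedRounds r) :
    {k | IsFiller r k}.Infinite := by
  have hinj : Function.Injective fun i => r i + (i + 1 + 2 ^ i) :=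
    (strictMono_nat_of_lt_succ fun i => (hr i).trans_le (Nat.le_add_right _ _)).injective
  refine (Set.infinite_range_of_injective hinj).mono (Set.range_subset_iff.2 fun i => ?_)
  have hround (j : ℕ) : ¬(r j ≤ r i + (i + 1 + 2 ^ i) ∧
      r i + (i + 1 + 2 ^ i) < r j + (j + 1 + 2 ^ j)) := by
    rintro ⟨hj, hj'⟩
    obtain rfl : i = j := by
      refine block_unique (s := r) (ℓ := fun i => i + 1 + 2 ^ i + 1) hr (by lia) (by lia) hj ?_
      lia
    lia
  refine ⟨?_, ?_⟩
  · rintro ⟨j, hj, hj'⟩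
    exact hround j ⟨hj, by lia⟩
  · rintro ⟨j, hj, hj'⟩
    exact hround j ⟨by lia, by lia⟩

lemma disjoint_isMain_isTail (hr : SeparatedRounds r) :
    Disjoint {k | IsMain r k} {k | IsTail r k} := by
  rw [Set.disjoint_left]
  rintro k ⟨i, hi, hi'⟩ ⟨j, hj, hj'⟩
  obtain rfl : i = j := hr.round_unique hi (by lia) (by lia) (by lia)
  lia

lemma bijective_roundOrder (hr : SeparatedRounds r) :
    Function.Bijective (roundOrder r) := by
  have hfiller : Set.range (Nat.nth (IsFiller r)) = {k | IsFiller r k} :=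
    Nat.range_nth_of_infinite (infinite_isFiller hr)
  have hmain : Set.range (Nat.nth (IsMain r)) = {k | IsMain r k} :=
    Nat.range_nth_of_infinite (infinite_isMain hr)
  have htail : Set.range (Nat.nth (IsTail r)) = {k | IsTail r k} :=
    Nat.range_nth_of_infinite (infinite_isTail hr)
  have hdense : Set.range (merge Even (Nat.nth (IsMain r)) (Nat.nth (IsTail r))) =
      {k | IsFiller r k}ᶜ := by
    rw [range_merge (Nat.frequently_atTop_iff_infinite.1 Nat.frequently_even)
      (by simpa using Nat.frequently_atTop_iff_infinite.1 Nat.frequently_odd), hmain, htail]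
    ext k
    simp only [IsFiller, Set.mem_union, Set.mem_compl_iff, Set.mem_ofPred_eq]
    tauto
  refine ⟨merge_injective (Nat.nth_injective (infinite_isFiller hr))
    (merge_injective (Nat.nth_injective (infinite_isMain hr))
      (Nat.nth_injective (infinite_isTail hr)) ?_) ?_, Set.range_eq_univ.1 ?_⟩
  · rw [hmain, htail]
    exact disjoint_isMain_isTail hr
  · rw [hfiller, hdense]
    exact disjoint_compl_right
  · rw [roundOrder, range_merge infinite_isPowerOfTwo infinite_not_isPowerOfTwo, hfiller, hdense,
      Set.union_compl_self]

end Rounds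

/-! ### The negligible terms -/

lemma integral_abs_add_le {f g : ℝ → ℝ} (hf : Continuous f) (hg : Continuous g) :
    ∫ x in (0 : ℝ)..1, |f x + g x| ≤
      (∫ x in (0 : ℝ)..1, |f x|) + ∫ x in (0 : ℝ)..1, |g x| := by
  have hf' := hf.abs.intervalIntegrable (μ := volume) 0 1
  have hg' := hg.abs.intervalIntegrable (μ := volume) 0 1
  rw [← intervalIntegral.integral_add hf' hg']
  exact intervalIntegral.integral_mono_on zero_le_one
    ((hf.add hg).abs.intervalIntegrable 0 1) (hf'.add hg') fun x _ => abs_add_le _ _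

lemma integral_abs_sum_le {ι : Type*} (s : Finset ι) {f : ι → ℝ → ℝ} {c : ℝ}
    (hf : ∀ i, Continuous (f i)) (hc : ∀ i ∈ s, ∫ x in (0 : ℝ)..1, |f i x| ≤ c) :
    ∫ x in (0 : ℝ)..1, |∑ i ∈ s, f i x| ≤ s.card * c := by
  classical
  induction s using Finset.induction_on with
  | empty => simp
  | insert i s hi ih =>
    simp only [Finset.sum_insert hi, Finset.card_insert_of_notMem hi, Nat.cast_add_one, add_mul,
      one_mul]
    rw [add_comm]
    refine (integral_abs_add_le (hf i) (continuous_finsetSum s fun i _ => hf i)).trans ?_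
    exact add_le_add (hc i (Finset.mem_insert_self i s))
      (ih fun j hj => hc j (Finset.mem_insert_of_mem hj))

/-- The size, up to a constant factor, of the negligible part of a sum of `N` terms. -/
def negligibleBound (N : ℕ) : ℝ := Nat.log 2 (2 * (N + 1)) * (2 * (N + 1) : ℝ) ^ (1 / 4 : ℝ)

lemma negligibleBound_mono : Monotone negligibleBound := fun M N hMN => by
  unfold negligibleBound
  gcongr

lemma log_add_one_le_log_two_mul (N : ℕ) : Nat.log 2 N + 1 ≤ Nat.log 2 (2 * (N + 1)) := by
  rw [mul_comm, Nat.log_mul_base one_lt_two (Nat.succ_ne_zero N)]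
  exact Nat.succ_le_succ (Nat.log_mono_right (Nat.le_succ N))

lemma rpow_le_negligibleBound (N : ℕ) : (N : ℝ) ^ (1 / 4 : ℝ) ≤ negligibleBound N := by
  have hlog : (1 : ℝ) ≤ Nat.log 2 (2 * (N + 1)) :=
    Nat.one_le_cast.2 ((Nat.le_add_left _ _).trans (log_add_one_le_log_two_mul N))
  calc (N : ℝ) ^ (1 / 4 : ℝ) ≤ (2 * (N + 1) : ℝ) ^ (1 / 4 : ℝ) := by
        gcongr
        linarith [(Nat.cast_nonneg N : (0 : ℝ) ≤ N)]
    _ ≤ negligibleBound N := le_mul_of_one_le_left (by positivity) hlog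

lemma integral_abs_cosSum_comp_mul_le (l : ℕ) {m : ℕ} (hm : m ≠ 0) :
    ∫ x in (0 : ℝ)..1, |cosSum l (m * x)| ≤ 8 * (l : ℝ) ^ (1 / 4 : ℝ) := by
  have hper : Function.Periodic (fun x => |cosSum l x|) 1 := (cosSum_periodic l).comp abs
  exact (integral_comp_natCast_mul_of_periodic hper
    ((continuous_cosSum l).abs.intervalIntegrable 0 1) hm).trans_le (integral_abs_cosSum_le l)

lemma count_isPowerOfTwo_le (N : ℕ) : Nat.count Nat.isPowerOfTwo N ≤ Nat.log 2 N + 1 := by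
  rw [Nat.count_eq_card_filter_range]
  refine (Finset.card_le_card (t := (Finset.range (Nat.log 2 N + 1)).image (2 ^ ·)) ?_).trans
    (Finset.card_image_le.trans_eq (Finset.card_range _))
  intro k hk
  obtain ⟨hkN, j, rfl⟩ := Finset.mem_filter.1 hk
  refine Finset.mem_image.2 ⟨j, Finset.mem_range.2 (Nat.lt_succ_of_le ?_), rfl⟩
  exact Nat.le_log_of_pow_le one_lt_two (Finset.mem_range.1 hkN).le

lemma count_isPowerOfTwo_le_negligibleBound (N : ℕ) :
    (Nat.count Nat.isPowerOfTwo N : ℝ) ≤ negligibleBound N := by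
  have hroot : 1 ≤ (2 * (N + 1) : ℝ) ^ (1 / 4 : ℝ) :=
    Real.one_le_rpow (by norm_cast; lia) (by norm_num)
  exact (Nat.cast_le.2 ((count_isPowerOfTwo_le N).trans (log_add_one_le_log_two_mul N))).trans
    (le_mul_of_one_le_right (Nat.cast_nonneg _) hroot)

lemma count_even (N : ℕ) : Nat.count Even N = (N + 1) / 2 := by
  induction N with
  | zero => simp
  | succ N ih =>
    rw [Nat.count_succ, ih]
    grind

lemma sum_cos_roundFreq_add {A : ℕ} {r : ℕ → ℕ} (hr : SeparatedRounds r) {i m : ℕ}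
    (hm : m ≤ i + 1 + 2 ^ i) (x : ℝ) :
    ∑ j ∈ Finset.range m, Real.cos (2 * π * roundFreq A r (r i + j) * x) =
      cosSum m (blockBase A (r i) * x) := by
  refine Finset.sum_congr rfl fun j hj => congrArg Real.cos ?_
  rw [roundFreq_add hr A ((Finset.mem_range.1 hj).trans_le hm)]
  push_cast
  ring

lemma exists_sum_cos_nth_isMain_eq (A : ℕ) {r : ℕ → ℕ} (hr : SeparatedRounds r) (q : ℕ) :
    ∃ K, ∃ m ≤ K, K * (K + 1) + 2 * m = 2 * q ∧ ∀ x : ℝ,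
      ∑ k ∈ Finset.range q, Real.cos (2 * π * roundFreq A r (Nat.nth (IsMain r) k) * x) =
        ∑ i ∈ Finset.range K, cosSum (i + 1) (blockBase A (r i) * x) +
          cosSum m (blockBase A (r K) * x) := by
  obtain ⟨K, m, hm, hq, hsum⟩ := exists_sum_range_nth_inBlocks_eq (M := ℝ) (s := r) (ℓ := (· + 1))
    (fun i => by have := hr i; lia) (fun _ => Nat.succ_pos _) q
  refine ⟨K, m, Nat.le_of_lt_succ hm, ?_, fun x => ?_⟩
  · have hgauss := Finset.sum_range_id_mul_two (K + 1)
    rw [Finset.sum_range_succ', add_zero, Nat.add_sub_cancel, mul_comm (K + 1)] at hgauss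
    lia
  · refine (hsum fun k => Real.cos (2 * π * roundFreq A r k * x)).trans ?_
    rw [sum_cos_roundFreq_add hr (by lia)]
    exact congrArg (· + _) (Finset.sum_congr rfl fun i _ => sum_cos_roundFreq_add hr (by lia) x)

lemma integral_abs_sum_cos_tail_le {A : ℕ} (hA : 0 < A) {r : ℕ → ℕ} (hr : SeparatedRounds r)
    {i m : ℕ} (hm : m ≤ 2 ^ i) :
    ∫ x in (0 : ℝ)..1,
        |∑ j ∈ Finset.range m, Real.cos (2 * π * roundFreq A r (r i + (i + 1) + j) * x)| ≤
      16 * (2 ^ (i + 1) : ℝ) ^ (1 / 4 : ℝ) := by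
  have hsplit (x : ℝ) :
      ∑ j ∈ Finset.range m, Real.cos (2 * π * roundFreq A r (r i + (i + 1) + j) * x) =
        cosSum (i + 1 + m) (blockBase A (r i) * x) +
          -cosSum (i + 1) (blockBase A (r i) * x) := by
    rw [← sum_cos_roundFreq_add hr (by lia), ← sum_cos_roundFreq_add hr (by lia),
      Finset.sum_range_add]
    simp only [add_assoc, add_neg_cancel_comm_assoc]
  have hle {l : ℕ} (hl : l ≤ 2 ^ (i + 1)) :
      ∫ x in (0 : ℝ)..1, |cosSum l (blockBase A (r i) * x)| ≤
        8 * (2 ^ (i + 1) : ℝ) ^ (1 / 4 : ℝ) := by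
    refine (integral_abs_cosSum_comp_mul_le l (blockBase_pos hA _).ne').trans ?_
    gcongr
    exact_mod_cast hl
  have hi : i + 1 ≤ 2 ^ i := Nat.lt_two_pow_self
  simp only [hsplit]
  refine (integral_abs_add_le (by fun_prop) (by fun_prop)).trans ?_
  simp only [abs_neg]
  linarith [hle (l := i + 1 + m) (by lia), hle (l := i + 1) (by lia)]

lemma integral_abs_sum_cos_nth_isTail_le {A : ℕ} (hA : 0 < A) {r : ℕ → ℕ}
    (hr : SeparatedRounds r) (q : ℕ) :
    ∫ x in (0 : ℝ)..1,
        |∑ k ∈ Finset.range q, Real.cos (2 * π * roundFreq A r (Nat.nth (IsTail r) k) * x)| ≤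
      16 * negligibleBound q := by
  obtain ⟨B, m, hm, hq, hsum⟩ := exists_sum_range_nth_inBlocks_eq (M := ℝ)
    (s := fun i => r i + (i + 1)) (ℓ := (2 ^ ·)) (fun i => by have := hr i; lia)
    (fun _ => Nat.two_pow_pos _) q
  have hpow : 2 ^ (B + 1) ≤ 2 * (q + 1) := by
    have := geom_sum_mul_add 1 B
    lia
  have hblock {i m : ℕ} (hi : i ≤ B) (hm : m ≤ 2 ^ i) :
      ∫ x in (0 : ℝ)..1,
          |∑ j ∈ Finset.range m, Real.cos (2 * π * roundFreq A r (r i + (i + 1) + j) * x)| ≤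
        16 * (2 * (q + 1) : ℝ) ^ (1 / 4 : ℝ) := by
    refine (integral_abs_sum_cos_tail_le hA hr hm).trans ?_
    gcongr
    exact_mod_cast (Nat.pow_le_pow_right two_pos (Nat.succ_le_succ hi)).trans hpow
  have hlog : ((B + 1 : ℕ) : ℝ) ≤ Nat.log 2 (2 * (q + 1)) :=
    Nat.cast_le.2 (Nat.le_log_of_pow_le one_lt_two hpow)
  calc _ = ∫ x in (0 : ℝ)..1,
        |∑ i ∈ Finset.range B, ∑ j ∈ Finset.range (2 ^ i),
            Real.cos (2 * π * roundFreq A r (r i + (i + 1) + j) * x) +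
          ∑ j ∈ Finset.range m, Real.cos (2 * π * roundFreq A r (r B + (B + 1) + j) * x)| :=
        intervalIntegral.integral_congr fun x _ =>
          congrArg abs (hsum fun k => Real.cos (2 * π * roundFreq A r k * x))
    _ ≤ B * (16 * (2 * (q + 1) : ℝ) ^ (1 / 4 : ℝ)) + 16 * (2 * (q + 1) : ℝ) ^ (1 / 4 : ℝ) := by
        refine (integral_abs_add_le (by fun_prop) (by fun_prop)).trans
          (add_le_add ?_ (hblock le_rfl hm.le))
        refine (integral_abs_sum_le _ (by fun_prop) fun i hi =>
          hblock (Finset.mem_range.1 hi).le le_rfl).trans_eq ?_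
        rw [Finset.card_range]
    _ = 16 * ((B + 1 : ℕ) * (2 * (q + 1) : ℝ) ^ (1 / 4 : ℝ)) := by push_cast; ring
    _ ≤ 16 * negligibleBound q := by unfold negligibleBound; gcongr

lemma sum_range_roundOrder (r : ℕ → ℕ) (f : ℕ → ℝ) (N : ℕ) :
    ∑ k ∈ Finset.range N, f (roundOrder r k) =
      ∑ q ∈ Finset.range (Nat.count Nat.isPowerOfTwo N), f (Nat.nth (IsFiller r) q) +
        (∑ q ∈ Finset.range (Nat.count Even (Nat.count (fun k => ¬Nat.isPowerOfTwo k) N)),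
            f (Nat.nth (IsMain r) q) +
          ∑ q ∈ Finset.range (Nat.count (fun k => ¬Even k)
              (Nat.count (fun k => ¬Nat.isPowerOfTwo k) N)), f (Nat.nth (IsTail r) q)) := by
  rw [roundOrder, sum_range_merge, sum_range_merge]

lemma integral_abs_sum_range_cos_le (n : ℕ → ℕ) (N : ℕ) :
    ∫ x in (0 : ℝ)..1, |∑ k ∈ Finset.range N, Real.cos (2 * π * n k * x)| ≤ N := by
  refine (integral_abs_sum_le (c := 1) _ (by fun_prop) fun k _ => ?_).trans_eq ?_
  · exact (intervalIntegral.integral_mono_on zero_le_one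
      (Continuous.intervalIntegrable (by fun_prop) _ _) intervalIntegrable_const
      fun x _ => Real.abs_cos_le_one _).trans_eq (by simp)
  · rw [Finset.card_range, mul_one]

lemma exists_sum_cos_roundOrder_eq (A : ℕ) {r : ℕ → ℕ} (hr : SeparatedRounds r) (N : ℕ) :
    ∃ K, K * (K + 1) ≤ N + 1 ∧ N ≤ (K + 1) * (K + 2) + Nat.log 2 N + 1 ∧
      ∃ m ≤ N, ∃ T ≤ N, ∀ x : ℝ,
        ∑ k ∈ Finset.range N, Real.cos (2 * π * roundFreq A r (roundOrder r k) * x) =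
          ∑ i ∈ Finset.range K, cosSum (i + 1) (blockBase A (r i) * x) +
          (∑ q ∈ Finset.range (Nat.count Nat.isPowerOfTwo N),
              Real.cos (2 * π * roundFreq A r (Nat.nth (IsFiller r) q) * x) +
            (cosSum m (blockBase A (r K) * x) + ∑ q ∈ Finset.range T,
              Real.cos (2 * π * roundFreq A r (Nat.nth (IsTail r) q) * x))) := by
  set Q := Nat.count (fun k => ¬Nat.isPowerOfTwo k) N
  have hcount : Nat.count Nat.isPowerOfTwo N + Q = N := count_add_count_not _ N
  have hsparse := count_isPowerOfTwo_le N
  obtain ⟨K, m, hmK, hm, hmain⟩ := exists_sum_cos_nth_isMain_eq A hr (Nat.count Even Q)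
  rw [count_even] at hm
  have hKm : K * (K + 1) + 2 * m ≤ Q + 1 := by lia
  refine ⟨K, by lia, by nlinarith [Nat.div_add_mod (Q + 1) 2, Nat.mod_lt (Q + 1) two_pos], m, ?_,
    Nat.count (fun k => ¬Even k) Q, (Nat.count_le _).trans (by lia), fun x => ?_⟩
  · nlinarith
  · rw [sum_range_roundOrder r fun k => Real.cos (2 * π * roundFreq A r k * x), hmain]
    ring

lemma exists_integral_abs_sum_cos_roundOrder_sub_le {A : ℕ} (hA : 0 < A) {r : ℕ → ℕ}
    (hr : SeparatedRounds r) (N : ℕ) :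
    ∃ K, K * (K + 1) ≤ N + 1 ∧ N ≤ (K + 1) * (K + 2) + Nat.log 2 N + 1 ∧
      ∫ x in (0 : ℝ)..1,
          |∑ k ∈ Finset.range N, Real.cos (2 * π * roundFreq A r (roundOrder r k) * x) -
            ∑ i ∈ Finset.range K, cosSum (i + 1) (blockBase A (r i) * x)| ≤
        25 * negligibleBound N := by
  obtain ⟨K, hK, hNK, m, hm, T, hT, hsum⟩ := exists_sum_cos_roundOrder_eq A hr N
  refine ⟨K, hK, hNK, ?_⟩
  have hfiller := (integral_abs_sum_range_cos_le
    (fun q => roundFreq A r (Nat.nth (IsFiller r) q)) _).trans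
      (count_isPowerOfTwo_le_negligibleBound N)
  have hpartial := (integral_abs_cosSum_comp_mul_le m (blockBase_pos hA (r K)).ne').trans
    (mul_le_mul_of_nonneg_left ((rpow_le_negligibleBound m).trans (negligibleBound_mono hm))
      (by norm_num))
  have htail := (integral_abs_sum_cos_nth_isTail_le hA hr T).trans
    (mul_le_mul_of_nonneg_left (negligibleBound_mono hT) (by norm_num))
  simp only [hsum, add_sub_cancel_left]
  refine (integral_abs_add_le (by fun_prop) (by fun_prop)).trans ?_
  refine (add_le_add hfiller ((integral_abs_add_le (by fun_prop) (by fun_prop)).trans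
    (add_le_add hpartial htail))).trans_eq ?_
  ring

/-! ### Asymptotics of the number of main blocks -/

lemma isLittleO_natLog_rpow {s : ℝ} (hs : 0 < s) :
    (fun N : ℕ => (Nat.log 2 N : ℝ)) =o[atTop] fun N : ℕ => (N : ℝ) ^ s := by
  have hlogb : (fun x : ℝ => Real.logb 2 x) =o[atTop] fun x => x ^ s := by
    simpa only [Real.logb, div_eq_inv_mul] using
      (isLittleO_log_rpow_atTop hs).const_mul_left (Real.log 2)⁻¹
  refine Asymptotics.IsBigO.trans_isLittleO (Asymptotics.IsBigO.of_norm_le fun N => ?_)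
    (hlogb.comp_tendsto tendsto_natCast_atTop_atTop)
  simpa using Real.natLog_le_logb N 2

lemma tendsto_negligibleBound_div_sqrt :
    Tendsto (fun N => negligibleBound N / √N) atTop (𝓝 0) := by
  have hy : Tendsto (fun N : ℕ => 2 * (N + 1)) atTop atTop :=
    tendsto_atTop_mono (fun N => (by lia : N ≤ 2 * (N + 1))) tendsto_id
  have hsmall : negligibleBound =o[atTop] fun N : ℕ => √(2 * (N + 1) : ℝ) := by
    have h := ((isLittleO_natLog_rpow (s := 1 / 4) (by norm_num)).comp_tendsto hy).mul_isBigO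
      (Asymptotics.isBigO_refl (fun N : ℕ => (2 * (N + 1) : ℝ) ^ (1 / 4 : ℝ)) atTop)
    refine h.congr (fun N => rfl) fun N => ?_
    simp only [Function.comp_apply]
    push_cast
    rw [← Real.rpow_add (by positivity), Real.sqrt_eq_rpow]
    norm_num
  have hsqrt : (fun N : ℕ => √(2 * (N + 1) : ℝ)) =O[atTop] fun N : ℕ => √(N : ℝ) := by
    refine Asymptotics.IsBigO.of_bound 2 ?_
    filter_upwards [eventually_ge_atTop 1] with N hN
    have hN' : (1 : ℝ) ≤ N := Nat.one_le_cast.2 hN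
    rw [Real.norm_of_nonneg (Real.sqrt_nonneg _), Real.norm_of_nonneg (Real.sqrt_nonneg _)]
    refine (Real.sqrt_le_sqrt (by linarith : 2 * (N + 1) ≤ 2 ^ 2 * (N : ℝ))).trans_eq ?_
    rw [Real.sqrt_mul (by positivity), Real.sqrt_sq zero_le_two]
  exact (hsmall.trans_isBigO hsqrt).tendsto_div_nhds_zero

lemma tendsto_inv_sqrt_mul_of_mul_add_one_le {K : ℕ → ℕ} (hle : ∀ N, K N * (K N + 1) ≤ N + 1)
    (hge : ∀ N, N ≤ (K N + 1) * (K N + 2) + Nat.log 2 N + 1) :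
    Tendsto (fun N : ℕ => (√N)⁻¹ * K N) atTop (𝓝 1) := by
  have hinv : Tendsto (fun N : ℕ => ((N : ℝ))⁻¹) atTop (𝓝 0) :=
    tendsto_inv_atTop_zero.comp tendsto_natCast_atTop_atTop
  have hlog : Tendsto (fun N : ℕ => (Nat.log 2 N : ℝ) / N) atTop (𝓝 0) := by
    simpa using (isLittleO_natLog_rpow one_pos).tendsto_div_nhds_zero
  have hinvsqrt : Tendsto (fun N : ℕ => (√N)⁻¹) atTop (𝓝 0) :=
    tendsto_inv_atTop_zero.comp (Real.tendsto_sqrt_atTop.comp tendsto_natCast_atTop_atTop)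
  have hupper : Tendsto (fun N : ℕ => √(1 + (N : ℝ)⁻¹)) atTop (𝓝 1) := by
    simpa using (hinv.const_add 1).sqrt
  have hlower : Tendsto (fun N : ℕ => √(1 - Nat.log 2 N / N - (N : ℝ)⁻¹) - 2 * (√N)⁻¹) atTop
      (𝓝 1) := by
    simpa using ((hlog.const_sub 1).sub hinv).sqrt.sub (hinvsqrt.const_mul 2)
  refine tendsto_of_tendsto_of_tendsto_of_le_of_le' hlower hupper ?_ ?_
  · filter_upwards [eventually_gt_atTop 0] with N hN
    have hN' : (0 : ℝ) < N := Nat.cast_pos.2 hN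
    have hge' : (N : ℝ) ≤ (K N + 1) * (K N + 2) + Nat.log 2 N + 1 := mod_cast hge N
    suffices √(1 - Nat.log 2 N / N - (N : ℝ)⁻¹) ≤ (√N)⁻¹ * (K N + 2) by linarith
    refine Real.sqrt_le_iff.2 ⟨by positivity, ?_⟩
    rw [mul_pow, inv_pow, Real.sq_sqrt hN'.le, inv_mul_eq_div, le_div_iff₀ hN']
    calc (1 - Nat.log 2 N / N - (N : ℝ)⁻¹) * N = N - Nat.log 2 N - 1 := by field_simp
      _ ≤ (K N + 2 : ℝ) ^ 2 := by nlinarith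
  · filter_upwards [eventually_gt_atTop 0] with N hN
    have hN' : (0 : ℝ) < N := Nat.cast_pos.2 hN
    have hle' : (K N : ℝ) * (K N + 1) ≤ N + 1 := mod_cast hle N
    refine Real.le_sqrt_of_sq_le ?_
    rw [mul_pow, inv_pow, Real.sq_sqrt hN'.le, inv_mul_eq_div, div_le_iff₀ hN']
    calc (K N : ℝ) ^ 2 ≤ N + 1 := by nlinarith
      _ = (1 + (N : ℝ)⁻¹) * N := by field_simp

/-! ### Convergence in distribution -/

lemma norm_integral_exp_sub_integral_exp_le {f g : ℝ → ℝ} (hf : Continuous f)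
    (hg : Continuous g) (s : ℝ) :
    ‖(∫ x in (0 : ℝ)..1, Complex.exp ((s * f x : ℝ) * Complex.I)) -
        ∫ x in (0 : ℝ)..1, Complex.exp ((s * g x : ℝ) * Complex.I)‖ ≤
      |s| * ∫ x in (0 : ℝ)..1, |f x - g x| := by
  rw [← intervalIntegral.integral_sub (Continuous.intervalIntegrable (by fun_prop) _ _)
    (Continuous.intervalIntegrable (by fun_prop) _ _), ← intervalIntegral.integral_const_mul]
  refine intervalIntegral.norm_integral_le_of_norm_le zero_le_one (.of_forall fun x _ => ?_)
    (Continuous.intervalIntegrable (by fun_prop) _ _)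
  have hlip := lipschitzWith_exp_ofReal_mul_I.norm_sub_le (s * f x) (s * g x)
  rwa [← mul_sub, NNReal.coe_one, one_mul, Real.norm_eq_abs, abs_mul] at hlip

lemma tendsto_integral_exp_sum_cos_roundOrder {A : ℕ} (hA : 4 ≤ A) {r : ℕ → ℕ}
    (hr : SeparatedRounds r) (t : ℝ) :
    Tendsto (fun N : ℕ => ∫ x in (0 : ℝ)..1, Complex.exp ((t * (√N)⁻¹ *
        ∑ k ∈ Finset.range N, Real.cos (2 * π * roundFreq A r (roundOrder r k) * x) : ℝ) *
          Complex.I))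
      atTop (𝓝 (Complex.exp (levyExponent levyMeasure t))) := by
  have hA0 : 0 < A := by lia
  choose K hle hge hrem using exists_integral_abs_sum_cos_roundOrder_sub_le hA0 hr
  have hsK := tendsto_inv_sqrt_mul_of_mul_add_one_le hle hge
  have hsqrt : Tendsto (fun N : ℕ => √N) atTop atTop :=
    Real.tendsto_sqrt_atTop.comp tendsto_natCast_atTop_atTop
  have hK : Tendsto K atTop atTop := by
    refine tendsto_natCast_atTop_iff.1 ((hsqrt.atTop_mul_pos one_pos hsK).congr' ?_)
    filter_upwards [eventually_ne_atTop 0] with N hN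
    exact mul_inv_cancel_left₀ (Real.sqrt_ne_zero'.2 (by positivity)) _
  have herror : Tendsto (fun N : ℕ => |t| * (25 * (negligibleBound N / √N)) +
      4 * π * (|t| * (√N)⁻¹)) atTop (𝓝 0) := by
    simpa using ((tendsto_negligibleBound_div_sqrt.const_mul 25).const_mul |t|).add
      ((hsqrt.inv_tendsto_atTop.const_mul |t|).const_mul (4 * π))
  refine tendsto_of_tendsto_of_dist (tendsto_prod_blockCharFun t hK hsK)
    (squeeze_zero (fun _ => dist_nonneg) (fun N => ?_) herror)
  have habs : |t * (√N)⁻¹| = |t| * (√N)⁻¹ := by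
    rw [abs_mul, abs_of_nonneg (inv_nonneg.2 (Real.sqrt_nonneg N))]
  have hmain := norm_integral_exp_sum_cosSum_sub_prod_le
    (fun i => (blockBase_pos hA0 (r i)).ne') (four_mul_eight_pow_mul_blockBase_le hA hr)
    (t * (√N)⁻¹) (K N)
  have hreplace := norm_integral_exp_sub_integral_exp_le
    (f := fun x => ∑ k ∈ Finset.range N, Real.cos (2 * π * roundFreq A r (roundOrder r k) * x))
    (g := fun x => ∑ i ∈ Finset.range (K N), cosSum (i + 1) (blockBase A (r i) * x))
    (by fun_prop) (by fun_prop) (t * (√N)⁻¹)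
  rw [habs] at hmain hreplace
  rw [dist_comm, dist_eq_norm]
  refine (norm_sub_le_norm_sub_add_norm_sub _ _ _).trans (add_le_add (hreplace.trans ?_) hmain)
  calc |t| * (√N)⁻¹ * ∫ x in (0 : ℝ)..1, _ ≤ |t| * (√N)⁻¹ * (25 * negligibleBound N) := by
        gcongr
        exact hrem N
    _ = |t| * (25 * (negligibleBound N / √N)) := by ring

lemma exists_tendsto_integral_of_tendsto_integral_exp {X : ℕ → ℝ → ℝ}
    (hX : ∀ N, Continuous (X N)) {f : ℝ → ℂ} (hf : ContinuousAt f 0)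
    (h : ∀ t : ℝ, Tendsto (fun N => ∫ x in (0 : ℝ)..1, Complex.exp (t * X N x * Complex.I))
      atTop (𝓝 (f t))) :
    ∃ G : ProbabilityMeasure ℝ, (∀ t, charFun (G : Measure ℝ) t = f t) ∧
      ∀ g : BoundedContinuousFunction ℝ ℝ,
        Tendsto (fun N => ∫ x in Set.Ioo (0 : ℝ) 1, g (X N x)) atTop (𝓝 (∫ y, g y ∂G)) := by
  have : IsProbabilityMeasure (volume.restrict (Set.Ioo (0 : ℝ) 1)) := ⟨by simp⟩
  let law (N : ℕ) : ProbabilityMeasure ℝ :=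
    ⟨(volume.restrict (Set.Ioo 0 1)).map (X N),
      Measure.isProbabilityMeasure_map (hX N).aemeasurable⟩
  have hlaw (N : ℕ) (t : ℝ) : charFun (law N : Measure ℝ) t =
      ∫ x in (0 : ℝ)..1, Complex.exp (t * X N x * Complex.I) := by
    rw [charFun_apply_real, intervalIntegral.integral_of_le zero_le_one,
      integral_Ioc_eq_integral_Ioo]
    exact integral_map (hX N).aemeasurable (Continuous.aestronglyMeasurable (by fun_prop))
  obtain ⟨G, hG, hlim⟩ := exists_tendsto_of_tendsto_charFun law f hf
    fun t => (h t).congr fun N => (hlaw N t).symm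
  refine ⟨G, hG, fun g => ?_⟩
  refine (ProbabilityMeasure.tendsto_iff_forall_integral_tendsto.1 hlim g).congr fun N => ?_
  exact integral_map (hX N).aemeasurable g.continuous.aestronglyMeasurable

theorem exists_tendsto_integral_sum_cos_roundOrder {A : ℕ} (hA : 4 ≤ A) {r : ℕ → ℕ}
    (hr : SeparatedRounds r) :
    ∃ G : ProbabilityMeasure ℝ,
      (∀ t : ℝ, charFun (G : Measure ℝ) t =
        Complex.exp (levyExponent levyMeasure t + t * levyDrift levyMeasure * Complex.I)) ∧
      ∀ g : BoundedContinuousFunction ℝ ℝ, Tendsto (fun N : ℕ => ∫ x in Set.Ioo (0 : ℝ) 1,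
          g ((∑ k ∈ Finset.range N, Real.cos (2 * π * roundFreq A r (roundOrder r k) * x)) / √N -
            -levyDrift levyMeasure))
        atTop (𝓝 (∫ y, g y ∂G)) := by
  refine exists_tendsto_integral_of_tendsto_integral_exp (fun N => by fun_prop) ?_ fun t => ?_
  · have hexp := continuousAt_zero_levyExponent integrable_sq_levyMeasure
    fun_prop
  · rw [Complex.exp_add]
    refine ((tendsto_integral_exp_sum_cos_roundOrder hA hr t).mul_const _).congr fun N => ?_
    rw [← intervalIntegral.integral_mul_const]
    refine intervalIntegral.integral_congr fun x _ => ?_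
    simp only [← Complex.exp_add]
    congr 1
    push_cast
    ring

/-- Theorem `counterex`, CLT part: for any positive `ε_k → 0` there are a sequence `(n_k)` of
positive integers with `n_{k+1}/n_k ≥ 1 + ε_k` for `k ≥ k₀`, a permutation `σ` of the indices,
a bounded sequence `(b_N)` and a nongaussian probability law `G` with the stated infinitely
divisible characteristic function, such that
`N^{-1/2} ∑_{k≤N} cos(2π n_{σ(k)} x) - b_N → G` in distribution on `(0,1)`. -/
theorem statement0
    (ε : ℕ → ℝ) (hε_pos : ∀ k, 0 < ε k) (hε_lim : Tendsto ε atTop (𝓝 0)) :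
    ∃ (n : ℕ → ℕ) (k₀ : ℕ) (σ : Equiv.Perm ℕ) (b : ℕ → ℝ) (G : Measure ℝ),
      (∀ k, 0 < n k) ∧
      (∀ k, k₀ ≤ k → (1 + ε k) * (n k : ℝ) ≤ (n (k + 1) : ℝ)) ∧
      IsProbabilityMeasure G ∧
      (∃ C : ℝ, ∀ N, |b N| ≤ C) ∧
      (∀ g : BoundedContinuousFunction ℝ ℝ,
        Tendsto (fun N : ℕ => ∫ x in Set.Ioo (0:ℝ) 1,
            g ((∑ k ∈ Finset.range N, Real.cos (2 * π * (n (σ k)) * x)) / Real.sqrt N - b N))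
          atTop (𝓝 (∫ y, g y ∂G))) ∧
      (∀ (m : ℝ) (v : NNReal), G ≠ ProbabilityTheory.gaussianReal m v) ∧
      (∀ t : ℝ,
        (∫ x : ℝ, Complex.exp (t * x * Complex.I) ∂G)
          = Complex.exp (∫ x : ℝ,
              (Complex.exp (t * x * Complex.I) - 1 -
                (t * x * Complex.I) / (1 + (x : ℂ) ^ 2)) ∂levyMeasure)) := by
  obtain ⟨C, hC⟩ := hε_lim.bddAbove_range
  obtain ⟨A, hA⟩ := exists_nat_ge (max 4 (1 + C))
  have hA4 : 4 ≤ A := by exact_mod_cast (le_max_left _ _).trans hA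
  have hεA (k : ℕ) : 1 + ε k ≤ A :=
    (add_le_add_right (hC ⟨k, rfl⟩) 1).trans ((le_max_right _ _).trans hA)
  obtain ⟨r, hr, hrε⟩ := exists_separatedRounds hε_lim
  obtain ⟨G, hGchar, hGlim⟩ := exists_tendsto_integral_sum_cos_roundOrder hA4 hr
  refine ⟨roundFreq A r, 0, Equiv.ofBijective _ (bijective_roundOrder hr),
    fun _ => -levyDrift levyMeasure, G, roundFreq_pos (by lia),
    fun k _ => mul_roundFreq_le_roundFreq_succ hr hrε (hε_pos k) (hεA k), inferInstance,
    ⟨_, fun _ => le_rfl⟩, hGlim,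
    ne_gaussianReal_of_charFun_eq_exp_levyExponent integrable_sq_levyMeasure levyMeasure_ne_zero
      hGchar, fun t => ?_⟩
  rw [integral_exp_sub_one_sub_div_eq integrable_sq_levyMeasure, ← hGchar, charFun_apply_real]
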